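/- For all n ≥ k ≥ 1 and all natural numbers u, v, the number of π ∈ NC(n,k) with skip(π) = u and mingarc(π) = v equals the number of parallelogram polyominoes P ∈ PP(n−k+1,k) with area(P) = u and bounce(P) = v; that is, N_{n,k}(q,t) = Σ_{π∈NC(n,k)} q^{skip(π)} t^{mingarc(π)}, giving a combinatorial interpretation of the q,t-Narayana polynomial in terms of noncrossing partitions for all k. -/

import Mathlib

namespace QtN

/-! ### Lattice paths and parallelogram polyominoes -/

/-- A step of a lattice path: east or north. -/
inductive Step : Type
  | E : Step
  | N : Step
  deriving DecidableEq, Repr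

/-- Number of east steps of a path. -/
def countE (w : List Step) : ℕ := w.count Step.E

/-- Number of north steps of a path. -/
def countN (w : List Step) : ℕ := w.count Step.N

/-- Endpoint of a path started at the origin. -/
def pathPos (w : List Step) : ℕ × ℕ := (countE w, countN w)

/-- The set of lattice points visited by a path started at the origin. -/
def pathPts (w : List Step) : Finset (ℕ × ℕ) :=
  ((List.range (w.length + 1)).map (fun i => pathPos (w.take i))).toFinset

/-- `colHeightsAux w h`: for each east step of `w` (in order), the number of north
steps preceding it, starting with `h` north steps already performed. -/
def colHeightsAux : List Step → ℕ → List ℕ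
  | [], _ => []
  | Step.E :: r, h => h :: colHeightsAux r h
  | Step.N :: r, h => colHeightsAux r (h + 1)

/-- Height at which the path `w` crosses the vertical strip `i ≤ x ≤ i + 1`. -/
def colHeight (w : List Step) (i : ℕ) : ℕ := (colHeightsAux w 0).getD i 0

/-- A parallelogram polyomino of size `m × n`: a pair of monotone lattice paths from
`(0,0)` to `(m,n)` (east/north steps), the upper path staying weakly above the lower
path, and the two paths meeting only at `(0,0)` and `(m,n)`. -/
structure Polyomino (m n : ℕ) : Type where
  lower : List Step
  upper : List Step
  lowerE : countE lower = m
  lowerN : countN lower = n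
  upperE : countE upper = m
  upperN : countN upper = n
  above : ∀ i < m, colHeight lower i ≤ colHeight upper i
  meet : pathPts upper ∩ pathPts lower = {(0, 0), (m, n)}

/-- The area statistic: number of unit squares between the two paths,
minus `(m + n - 1)`. -/
def area {m n : ℕ} (P : Polyomino m n) : ℕ :=
  (∑ i ∈ Finset.range m, (colHeight P.upper i - colHeight P.lower i)) - (m + n - 1)

/-- Where an eastward run at height `y`, starting at `x`, first hits the lower path. -/
def eastTarget (hL : ℕ → ℕ) (m x y : ℕ) : ℕ :=
  ((List.range m).filter (fun i => decide (x ≤ i ∧ y ≤ hL i))).headD m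

/-- Total bounce contribution: from state `(x, y)` just after the `j`-th east-to-north
turn (counting the turns made so far), alternately go north until hitting the upper
path and east until hitting the lower path, each step contributing the number of
east-to-north turns preceding it. -/
def bounceAux (hU hL : ℕ → ℕ) (m n : ℕ) : ℕ → ℕ → ℕ → ℕ → ℕ
  | 0, _, _, _ => 0
  | fuel + 1, x, y, j =>
    if x = m ∧ y = n then 0
    else
      let y' := hU (x - 1)
      let x' := if y' = n then m else eastTarget hL m x y'
      (j + 1) * ((y' - y) + (x' - x)) + bounceAux hU hL m n fuel x' y' (j + 1)

/-- The bounce statistic of a parallelogram polyomino: the bounce path starts with a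
single east step (contributing `0`) and then alternates north runs (to the ceiling)
and east runs (to the floor); each step contributes the number of east-to-north turns
preceding it; finally `(m + n - 1)` is subtracted. -/
def bounce {m n : ℕ} (P : Polyomino m n) : ℕ :=
  bounceAux (colHeight P.upper) (colHeight P.lower) m n (m + n + 2) 1 0 0 - (m + n - 1)

/-! ### Set partitions and noncrossing partitions -/

/-- Maximum of a finite set of naturals (`0` for the empty set). -/
def fmax (β : Finset ℕ) : ℕ := β.sup id

/-- Minimum of a finite set of naturals (`0` for the empty set). -/
def fmin (β : Finset ℕ) : ℕ := if h : β.Nonempty then β.min' h else 0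

/-- A set partition of `{1, …, n}`, given by its finite set of blocks. -/
structure SetPartition (n : ℕ) : Type where
  blocks : Finset (Finset ℕ)
  not_empty_mem : ∅ ∉ blocks
  cover : ∀ i : ℕ, i ∈ Finset.Icc 1 n ↔ ∃ β ∈ blocks, i ∈ β
  disjoint : ∀ β ∈ blocks, ∀ γ ∈ blocks, β ≠ γ → Disjoint β γ

/-- A family of blocks is noncrossing if there are no `a < b < c < d` with
`a, c` in one block and `b, d` in a different block. -/
def IsNoncrossing (bs : Finset (Finset ℕ)) : Prop :=
  ∀ a b c d : ℕ, a < b → b < c → c < d →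
    ∀ β ∈ bs, ∀ γ ∈ bs, a ∈ β → c ∈ β → b ∈ γ → d ∈ γ → β = γ

/-- `NC n k`: noncrossing partitions of `{1, …, n}` with exactly `n - k + 1` blocks. -/
abbrev NC (n k : ℕ) : Type :=
  {P : SetPartition n // IsNoncrossing P.blocks ∧ P.blocks.card = n - k + 1}

/-- The skip statistic: `∑_{β} (max β - min β - |β| + 1)`. -/
def skip (bs : Finset (Finset ℕ)) : ℕ :=
  ∑ β ∈ bs, ((fmax β + 1 - fmin β) - β.card)

/-- The non-singleton blocks of a partition. -/
def nsBlocks (bs : Finset (Finset ℕ)) : Finset (Finset ℕ) :=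
  bs.filter (fun β => 2 ≤ β.card)

/-- The block of `bs` containing `x` (junk if there is not exactly one). -/
def blockContaining (bs : Finset (Finset ℕ)) (x : ℕ) : Finset ℕ :=
  (bs.filter (fun β => x ∈ β)).sup id

/-- For a noncrossing partition in `NC n 3`, the quadruple `(a, b, c, d)` describing its
non-singleton blocks: for two pair blocks `{a,b}` and `{c,d}` (with `a` the global
minimum) this is `(a, b, c, d)`; for a single triple block `{a, b, c}` (`a < b < c`)
this is `(a, b, b, c)`. -/
def blockQuad (bs : Finset (Finset ℕ)) : ℕ × ℕ × ℕ × ℕ :=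
  let A := blockContaining (nsBlocks bs) (fmin ((nsBlocks bs).sup id))
  if (nsBlocks bs).card = 1 then
    let l := A.sort (· ≤ ·)
    (l.getD 0 0, l.getD 1 0, l.getD 1 0, l.getD 2 0)
  else
    let B := ((nsBlocks bs).erase A).sup id
    (fmin A, fmax A, fmin B, fmax B)

/-- The leap statistic on `NC n 3`: `leap(ab|cd) = c - 2 + max(0, c - b)`,
and `leap({a,b,c}) = b - 2` (the case `b = c`). -/
def leap (bs : Finset (Finset ℕ)) : ℕ :=
  let (_, b, c, _) := blockQuad bs
  (c - 2) + (c - b)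

/-- The skew statistic on `NC n 3`: `skew(ab|cd) = c - 2 + a` if `b < c`, else `c - 2`;
`skew({a,b,c}) = b - 2` (the case `b = c`). -/
def skew (bs : Finset (Finset ℕ)) : ℕ :=
  let (a, b, c, _) := blockQuad bs
  if b < c then c - 2 + a else c - 2

/-- The mag statistic on `NC n 3`: `mag(ab|cd) = a + max(b, c) - 2 - ⌈(b - a)/2⌉`,
and `mag({a,b,c}) = a + b - 2 - ⌈(b - a)/2⌉` (the case `b = c`). -/
def mag (bs : Finset (Finset ℕ)) : ℕ :=
  let (a, b, c, _) := blockQuad bs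
  a + max b c - 2 - (b - a + 1) / 2

/-- The area statistic on noncrossing partitions:
`area(π) = ∑_{β, β' ∈ π} #{ i ∈ β' : i < max β < max β' }` (ordered pairs of blocks). -/
def ncArea (bs : Finset (Finset ℕ)) : ℕ :=
  ∑ β ∈ bs, ∑ γ ∈ bs, (γ.filter (fun i => i < fmax β ∧ fmax β < fmax γ)).card

/-- The elements of the non-singleton blocks, listed in increasing order, with
the middle element of a size-3 block listed twice. -/
def nsList (bs : Finset (Finset ℕ)) : List ℕ :=
  let l := ((nsBlocks bs).sup id).sort (· ≤ ·)
  if l.length = 3 then [l.getD 0 0, l.getD 1 0, l.getD 1 0, l.getD 2 0] else l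

/-- The multiset of block sizes of a partition. -/
def blockSizes (bs : Finset (Finset ℕ)) : Multiset ℕ := bs.val.map Finset.card

/-- The image of a partition of `{1, …, n}` under the flip `i ↦ n + 1 - i`. -/
def flipBlocks (n : ℕ) (bs : Finset (Finset ℕ)) : Finset (Finset ℕ) :=
  bs.image (fun β => β.image (fun i => n + 1 - i))

/-! ### The mingarc statistic -/

/-- The gaps `ν_r = m_{r+1} - m_r - 1` between consecutive block minima
`m_1 < ⋯ < m_h` (with `m_{h+1} = n + 1`). -/
def nuList (n : ℕ) (bs : Finset (Finset ℕ)) : List ℕ :=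
  let ms := ((bs.image fmin).sort (· ≤ ·)) ++ [n + 1]
  (List.range (bs.image fmin).card).map (fun r => ms.getD (r + 1) 0 - ms.getD r 0 - 1)

/-- Concatenation of `replicate ν c` over a list of pairs `(c, ν)`. -/
def repeatEach : List (ℕ × ℕ) → List ℕ
  | [] => []
  | p :: r => List.replicate p.2 p.1 ++ repeatEach r

/-- The right endpoints `y_1 ≤ ⋯ ≤ y_{k-1}`: each block maximum `c_r` repeated
`ν_r` times, in increasing order. -/
def ysList (n : ℕ) (bs : Finset (Finset ℕ)) : List ℕ :=
  repeatEach (List.zip ((bs.image fmax).sort (· ≤ ·)) (nuList n bs))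

/-- The left endpoints `x_1 < ⋯ < x_{k-1}`: the elements of `{1, …, n}` that are not
block maxima, in increasing order. -/
def xsList (n : ℕ) (bs : Finset (Finset ℕ)) : List ℕ :=
  ((Finset.Icc 1 n).filter (fun i => i ∉ bs.image fmax)).sort (· ≤ ·)

/-- Greedy left-to-right selection of arcs: keep the first arc, and thereafter keep the
earliest arc whose left endpoint exceeds the right endpoint of the last kept arc. -/
def greedyArcs : List (ℕ × ℕ) → Option ℕ → List (ℕ × ℕ)
  | [], _ => []
  | a :: rest, none => a :: greedyArcs rest (some a.2)
  | a :: rest, some r =>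
      if r < a.1 then a :: greedyArcs rest (some a.2) else greedyArcs rest (some r)

/-- The mingarc statistic: the sum of `n - y_i` over the greedily selected
candidate arcs `[x_i, y_i]`. -/
def mingarc (n : ℕ) (bs : Finset (Finset ℕ)) : ℕ :=
  ((greedyArcs (List.zip (xsList n bs) (ysList n bs)) none).map (fun p => n - p.2)).sum

/-! ### The map η from polyominoes to noncrossing partitions -/

/-- Largest column index `i < m` with `colHeight lower i ≤ j`: the rightmost cell
adjacent to the floor in row `j`. -/
def eFloor {m k : ℕ} (P : Polyomino m k) (j : ℕ) : ℕ :=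
  (((List.range m).filter (fun i => decide (colHeight P.lower i ≤ j))).getLastD 0)

/-- Smallest column index `i` with `colHeight upper i ≥ j + 1`: the leftmost cell
adjacent to the ceiling in row `j` (with default `m - 1`). -/
def fCeil {m k : ℕ} (P : Polyomino m k) (j : ℕ) : ℕ :=
  (((List.range m).filter (fun i => decide (j + 1 ≤ colHeight P.upper i))).headD (m - 1))

/-- The number of cells adjacent to the ceiling in row `j`. -/
def rowCount {m k : ℕ} (P : Polyomino m k) (j : ℕ) : ℕ :=
  fCeil P (j + 1) - fCeil P j + 1

/-- Pick, `cnt` times, the largest label in `{1, …, L}` not used yet. -/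
def pickRow : ℕ → ℕ → Finset ℕ → Finset ℕ
  | 0, _, _ => ∅
  | cnt + 1, L, used =>
      let x := fmax ((Finset.Icc 1 L) \ used)
      insert x (pickRow cnt L (insert x used))

/-- The blocks of `η(P)`: label the cells adjacent to the floor `1, …, n` going bottom
to top, left to right (the label of the floor cell in column `i`, row `j` is
`i + j + 1`, and the labels present in rows `≤ j` are exactly `1, …, eFloor P j + j + 1`);
then going bottom to top, left to right over the cells adjacent to the ceiling, assign
to each the largest unused indexing label occurring in the same row or below; the
blocks are the label sets of the ceiling rows. -/
def etaBlocks {m k : ℕ} (P : Polyomino m k) : Finset (Finset ℕ) :=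
  (((List.range k).foldl
      (fun st j =>
        let B := pickRow (rowCount P j) (eFloor P j + j + 1) st.1
        (st.1 ∪ B, B :: st.2))
      ((∅ : Finset ℕ), ([] : List (Finset ℕ)))).2).toFinset



/-! ### q-analogues -/

noncomputable def qn (q : ℝ) (n : ℕ) : ℝ := ∑ j ∈ Finset.range n, q ^ j

lemma qn_add (q : ℝ) (a b : ℕ) : qn q (a + b) = qn q a + q ^ a * qn q b := by
  unfold qn
  rw [Finset.sum_range_add, Finset.mul_sum]
  simp [pow_add]

lemma qn_pos {q : ℝ} (hq : 0 < q) (n : ℕ) : 0 < qn q (n + 1) := by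
  unfold qn
  exact Finset.sum_pos (fun _ _ => by positivity) (by simp)

noncomputable def qf (q : ℝ) : ℕ → ℝ
  | 0 => 1
  | n + 1 => qn q (n + 1) * qf q n

lemma qf_pos {q : ℝ} (hq : 0 < q) (n : ℕ) : 0 < qf q n := by
  induction n with
  | zero => simp [qf]
  | succ n ih => simp only [qf]; exact mul_pos (qn_pos hq n) ih

noncomputable def qQ (q : ℝ) (a b : ℕ) : ℝ := qf q (a + b) / (qf q a * qf q b)

lemma qQ_zero_left {q : ℝ} (hq : 0 < q) (b : ℕ) : qQ q 0 b = 1 := by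
  have := (qf_pos hq b).ne'
  simp [qQ, qf, this]

lemma qQ_zero_right {q : ℝ} (hq : 0 < q) (b : ℕ) : qQ q b 0 = 1 := by
  have := (qf_pos hq b).ne'
  simp [qQ, qf, this]

lemma qQ_succ {q : ℝ} (hq : 0 < q) (a b : ℕ) :
    qQ q (a + 1) (b + 1) = qQ q a (b + 1) + q ^ (a + 1) * qQ q (a + 1) b := by
  have h1 := (qf_pos hq a).ne'
  have h2 := (qf_pos hq b).ne'
  have h3 := (qn_pos hq a).ne'
  have h4 := (qn_pos hq b).ne'
  have e : qn q (a + b + 1 + 1) = qn q (a + 1) + q ^ (a + 1) * qn q (b + 1) := by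
    rw [← qn_add]; congr 1; ring
  have e1 : a + 1 + (b + 1) = (a + b + 1) + 1 := by ring
  have e2 : a + (b + 1) = a + b + 1 := by ring
  have e3 : a + 1 + b = a + b + 1 := by ring
  unfold qQ
  rw [e1, e2, e3]
  simp only [qf]
  rw [e]
  field_simp

lemma qQ_succ' {q : ℝ} (hq : 0 < q) (a b : ℕ) :
    qQ q (a + 1) (b + 1) = q ^ (b + 1) * qQ q a (b + 1) + qQ q (a + 1) b := by
  have h1 := (qf_pos hq a).ne'
  have h2 := (qf_pos hq b).ne'
  have h3 := (qn_pos hq a).ne'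
  have h4 := (qn_pos hq b).ne'
  have e : qn q (a + b + 1 + 1) = qn q (b + 1) + q ^ (b + 1) * qn q (a + 1) := by
    rw [← qn_add]; congr 1; ring
  have e1 : a + 1 + (b + 1) = (a + b + 1) + 1 := by ring
  have e2 : a + (b + 1) = a + b + 1 := by ring
  have e3 : a + 1 + b = a + b + 1 := by ring
  unfold qQ
  rw [e1, e2, e3]
  simp only [qf]
  rw [e]
  field_simp
  ring

noncomputable def gb (q : ℝ) (n k : ℕ) : ℝ := if k ≤ n then qQ q k (n - k) else 0

lemma gb_add (q : ℝ) (a b : ℕ) : gb q (a + b) a = qQ q a b := by simp [gb]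

lemma gb_lt (q : ℝ) {n k : ℕ} (h : n < k) : gb q n k = 0 := by simp [gb, h]

lemma gb_zero {q : ℝ} (hq : 0 < q) (n : ℕ) : gb q n 0 = 1 := by
  simp [gb, qQ_zero_left hq]

lemma gb_self {q : ℝ} (hq : 0 < q) (n : ℕ) : gb q n n = 1 := by
  simp [gb, qQ_zero_right hq]

lemma gb_succ {q : ℝ} (hq : 0 < q) (n k : ℕ) :
    gb q (n + 1) (k + 1) = gb q n k + q ^ (k + 1) * gb q n (k + 1) := by
  rcases lt_trichotomy n k with h | h | h
  · rw [gb_lt q h, gb_lt q (by omega), gb_lt q (by omega)]; simp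
  · subst h; rw [gb_self hq, gb_self hq, gb_lt q (by omega)]; simp
  · obtain ⟨d, rfl⟩ := Nat.exists_eq_add_of_lt h
    have e1 : k + d + 1 + 1 = (k + 1) + (d + 1) := by ring
    have e2 : k + d + 1 = k + (d + 1) := by ring
    have e3 : k + d + 1 = (k + 1) + d := by ring
    rw [e1, gb_add, e2, gb_add, ← e2, e3, gb_add, qQ_succ hq]

lemma gb_succ' {q : ℝ} (hq : 0 < q) (n k : ℕ) :
    gb q (n + 1) (k + 1) = gb q n (k + 1) + q ^ (n - k) * gb q n k := by
  rcases lt_trichotomy n k with h | h | h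
  · rw [gb_lt q h, gb_lt q (by omega), gb_lt q (by omega)]; simp
  · subst h; rw [gb_self hq, gb_self hq, gb_lt q (by omega)]; simp
  · obtain ⟨d, rfl⟩ := Nat.exists_eq_add_of_lt h
    have e1 : k + d + 1 + 1 = (k + 1) + (d + 1) := by ring
    have e2 : k + d + 1 = k + (d + 1) := by ring
    have e3 : k + d + 1 = (k + 1) + d := by ring
    have e4 : k + d + 1 - k = d + 1 := by omega
    rw [e4, e1, gb_add, e2, gb_add, ← e2, e3, gb_add, qQ_succ' hq]
    ring

lemma gb_vand {q : ℝ} (hq : 0 < q) (m n : ℕ) : ∀ e : ℕ,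
    ∑ j ∈ Finset.range (n + 1), q ^ (j * (j + e)) * gb q m (j + e) * gb q n j
      = gb q (m + n) (n + e) := by
  induction n with
  | zero => intro e; simp [gb_self hq]
  | succ n ih =>
    intro e
    rw [Finset.sum_range_succ']
    have h : ∀ j ∈ Finset.range (n + 1),
        q ^ ((j + 1) * (j + 1 + e)) * gb q m (j + 1 + e) * gb q (n + 1) (j + 1)
        = q ^ ((j + 1) * (j + 1 + e)) * gb q m (j + 1 + e) * gb q n (j + 1)
          + q ^ (n + 1 + e) * (q ^ (j * (j + (1 + e))) * gb q m (j + (1 + e)) * gb q n j) := by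
      intro j hj
      have hj' : j ≤ n := by simpa [Nat.lt_succ_iff] using hj
      obtain ⟨d, rfl⟩ := Nat.exists_eq_add_of_le hj'
      rw [gb_succ' hq, mul_add]
      congr 1
      have : j + d - j = d := by omega
      rw [this, show j + 1 + e = j + (1 + e) by ring]
      have : q ^ ((j + 1) * (j + (1 + e))) * q ^ d
        = q ^ (j + d + 1 + e) * q ^ (j * (j + (1 + e))) := by
        rw [← pow_add, ← pow_add]; congr 1; ring
      linear_combination (gb q m (j + (1 + e)) * gb q (j + d) j) * this
    rw [Finset.sum_congr rfl h, Finset.sum_add_distrib, ← Finset.mul_sum, ih (1 + e)]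
    have h2 := ih e
    rw [Finset.sum_range_succ', ] at h2
    have h3 : ∑ j ∈ Finset.range (n + 1),
       q ^ ((j + 1) * (j + 1 + e)) * gb q m (j + 1 + e) * gb q n (j + 1)
       = ∑ j ∈ Finset.range n,
       q ^ ((j + 1) * (j + 1 + e)) * gb q m (j + 1 + e) * gb q n (j + 1) := by
      rw [Finset.sum_range_succ, gb_lt q (Nat.lt_succ_self n)]; simp
    rw [h3]
    rw [gb_zero hq] at h2 ⊢
    have e1 : m + (n + 1) = m + n + 1 := by ring
    have e2 : n + 1 + e = (n + e) + 1 := by ring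
    have e3 : n + (1 + e) = (n + e) + 1 := by ring
    rw [e1, e2, gb_succ hq, e3]
    linear_combination h2

lemma qQ_vand {q : ℝ} (hq : 0 < q) (a b : ℕ) :
    qQ q a (b + 1) = ∑ k ∈ Finset.range (b + 1),
      q ^ (k * (k + 1)) * gb q (a + 1) (k + 1) * gb q b k := by
  rw [gb_vand hq (a + 1) b 1, show a + 1 + b = (b + 1) + a by ring, gb_add]
  unfold qQ
  rw [add_comm, mul_comm]

noncomputable def qM (q : ℝ) (k a j b : ℕ) : ℝ :=
  qf q (k + a + j + b) / (qf q k * qf q a * qf q j * qf q b)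

noncomputable def qH (q t : ℝ) : ℕ → ℕ → ℕ → ℕ → ℝ
  | 0, _, _, _ => 0
  | N + 1, k, R, S => q ^ (k * (k + 1)) * (qM q k R 0 S +
      ∑ j ∈ Finset.range (R + S), ∑ a ∈ Finset.range (R - j), ∑ b ∈ Finset.range (S - j),
        qM q k a (j + 1) b * t ^ ((R - j - 1 - a) + (S - j - 1 - b) + (j + 1)) *
          qH q t N j (R - j - 1 - a) (S - j - 1 - b))

lemma qM_symm (q : ℝ) (k a j b : ℕ) : qM q k a j b = qM q k b j a := by
  unfold qM
  rw [show k + a + j + b = k + b + j + a by ring]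
  congr 1
  ring

lemma qH_symm (q t : ℝ) (N : ℕ) : ∀ k R S, qH q t N k R S = qH q t N k S R := by
  induction N with
  | zero => intros; rfl
  | succ N ih =>
    intro k R S
    simp only [qH]
    rw [qM_symm, add_comm R S]
    congr 2
    refine Finset.sum_congr rfl fun j _ => ?_
    rw [Finset.sum_comm]
    refine Finset.sum_congr rfl fun b _ => Finset.sum_congr rfl fun a _ => ?_
    rw [qM_symm, ih, add_comm (R - j - 1 - a)]

lemma qX {q : ℝ} (hq : 0 < q) (t : ℝ) (N k R S : ℕ) :
    qH q t (N + 1) k R S = q ^ (k * (k + 1)) * ∑ a ∈ Finset.range (R + 1),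
      ∑ b ∈ Finset.range (S + 1), gb q (k + a) k * qQ q (k + a) b * t ^ ((R - a) + (S - b)) *
      ((if S - b = 0 ∧ R - a = 0 then 1 else 0) + ∑ j ∈ Finset.range (R - a),
        gb q b (j + 1) * qH q t N j (R - a - j - 1) (S - b)) := by
  simp only [qH]
  congr 1
  simp only [mul_add, Finset.sum_add_distrib]
  congr 1
  · rw [Finset.sum_eq_single R, Finset.sum_eq_single S]
    · simp only [Nat.sub_self, and_self, if_true, gb_add, qQ, qM]
      have := (qf_pos hq (k + R)).ne'
      simp only [qf, add_zero, mul_one, pow_zero]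
      field_simp
    · intro b hb hb'
      have : S - b ≠ 0 := by simp at hb; omega
      simp [this]
    · simp
    · intro a ha ha'
      have : R - a ≠ 0 := by simp at ha; omega
      simp [this]
    · simp
  · symm
    have h1 : ∀ a ∈ Finset.range (R + 1), (∑ b ∈ Finset.range (S + 1),
        gb q (k + a) k * qQ q (k + a) b * t ^ ((R - a) + (S - b)) *
        ∑ j ∈ Finset.range (R - a), gb q b (j + 1) * qH q t N j (R - a - j - 1) (S - b))
        = ∑ j ∈ Finset.range (R - a), ∑ b ∈ Finset.range (S + 1),
         gb q (k + a) k * qQ q (k + a) b * t ^ ((R - a) + (S - b)) *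
          (gb q b (j + 1) * qH q t N j (R - a - j - 1) (S - b)) := by
      intro a _
      simp only [Finset.mul_sum]
      rw [Finset.sum_comm]
    rw [Finset.sum_congr rfl h1]
    rw [Finset.sum_comm' (s' := fun j => Finset.range (R - j)) (t' := Finset.range (R + S))]
    swap
    · intro x y
      simp only [Finset.mem_range]
      omega
    refine Finset.sum_congr rfl fun j _ => Finset.sum_congr rfl fun a ha => ?_
    simp only [Finset.mem_range] at ha
    by_cases hS : j < S
    · obtain ⟨d, rfl⟩ := Nat.exists_eq_add_of_lt hS
      rw [show j + d + 1 + 1 = (j + 1) + (d + 1) by ring, Finset.sum_range_add]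
      rw [Finset.sum_eq_zero, zero_add]
      · rw [show j + d + 1 - j = d + 1 by omega]
        refine Finset.sum_congr rfl fun b hb => ?_
        simp only [Finset.mem_range] at hb
        rw [show R - a + (j + d + 1 - (j + 1 + b)) = R - j - 1 - a + (d + 1 - 1 - b) + (j + 1) by omega,
          show R - a - j - 1 = R - j - 1 - a by omega,
          show j + d + 1 - (j + 1 + b) = d + 1 - 1 - b by omega, gb_add, gb_add]
        have : qQ q k a * qQ q (k + a) (j + 1 + b) * qQ q (j + 1) b = qM q k a (j + 1) b := by
          unfold qQ qM
          have h1 := (qf_pos hq (k + a)).ne'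
          have h2 := (qf_pos hq (j + 1 + b)).ne'
          rw [show k + a + (j + 1 + b) = k + a + (j + 1) + b by ring]
          field_simp
        rw [← this]
        ring
      · intro b hb
        simp only [Finset.mem_range] at hb
        rw [gb_lt q (n := b) (by omega)]; simp
    · rw [show S - j = 0 by omega, Finset.range_zero, Finset.sum_empty]
      refine Finset.sum_eq_zero fun b hb => ?_
      simp only [Finset.mem_range] at hb
      rw [gb_lt q (n := b) (by omega)]; simp

lemma qT_eq {q : ℝ} (hq : 0 < q) (t : ℝ) (T : ℕ → ℕ → ℕ → ℝ)
    (h0 : ∀ a, T a 0 0 = 1) (h00 : ∀ r s, r + s ≠ 0 → T 0 r s = 0)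
    (hs : ∀ a r s, r + s ≠ 0 → T (a + 1) r s = ∑ b ∈ Finset.range s, ∑ b' ∈ Finset.range (r + 1),
      qQ q a (b + 1) * qQ q b b' * t ^ ((s - (b + 1)) + (r - b')) * T b' (r - b') (s - (b + 1))) :
    ∀ N a r s, s ≤ N → T a r s = (if r = 0 ∧ s = 0 then 1 else 0) +
      ∑ k ∈ Finset.range s, gb q a (k + 1) * qH q t N k (s - k - 1) r := by
  intro N
  induction N with
  | zero =>
    intro a r s hsN
    obtain rfl : s = 0 := by omega
    rcases Nat.eq_zero_or_pos r with rfl | hr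
    · simp [h0]
    · cases a with
      | zero => rw [h00 _ _ (by omega)]; simp; omega
      | succ a => rw [hs _ _ _ (by omega)]; simp; omega
  | succ N ih =>
    intro a r s hsN
    by_cases hrs : r + s = 0
    · obtain ⟨rfl, rfl⟩ : r = 0 ∧ s = 0 := by omega
      simp [h0]
    have hc : ¬ (r = 0 ∧ s = 0) := by omega
    rw [if_neg hc, zero_add]
    cases a with
    | zero =>
      rw [h00 _ _ hrs, Finset.sum_eq_zero]
      intro k _
      rw [gb_lt q (by omega)]; simp
    | succ a =>
      rw [hs _ _ _ hrs]
      have h1 : ∀ b ∈ Finset.range s, (∑ b' ∈ Finset.range (r + 1),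
          qQ q a (b + 1) * qQ q b b' * t ^ ((s - (b + 1)) + (r - b')) * T b' (r - b') (s - (b + 1)))
          = ∑ k ∈ Finset.range (b + 1), q ^ (k * (k + 1)) * gb q (a + 1) (k + 1) * gb q b k *
            ∑ b' ∈ Finset.range (r + 1), qQ q b b' * t ^ ((s - (b + 1)) + (r - b')) *
            ((if r - b' = 0 ∧ s - (b + 1) = 0 then 1 else 0) +
              ∑ j ∈ Finset.range (s - (b + 1)), gb q b' (j + 1) *
                qH q t N j (s - (b + 1) - j - 1) (r - b')) := by
        intro b hb
        simp only [Finset.mem_range] at hb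
        rw [← Finset.sum_mul, ← qQ_vand hq, Finset.mul_sum]
        refine Finset.sum_congr rfl fun b' _ => ?_
        rw [ih b' (r - b') (s - (b + 1)) (by omega)]
        ring
      rw [Finset.sum_congr rfl h1]
      rw [Finset.sum_comm' (s' := fun k => Finset.Ico k s) (t' := Finset.range s)]
      swap
      · intro x y
        simp only [Finset.mem_range, Finset.mem_Ico]
        omega
      refine Finset.sum_congr rfl fun k hk => ?_
      simp only [Finset.mem_range] at hk
      rw [qX hq, Finset.sum_Ico_eq_sum_range, show s - k = s - k - 1 + 1 by omega]
      simp only [Finset.mul_sum]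
      refine Finset.sum_congr rfl fun x hx => ?_
      simp only [Finset.mem_range] at hx
      refine Finset.sum_congr rfl fun b' _ => ?_
      rw [show s - (k + x + 1) = s - k - 1 + 1 - 1 - x by omega]
      ring_nf

lemma qT_symm {q : ℝ} (hq : 0 < q) (t : ℝ) (T : ℕ → ℕ → ℕ → ℝ)
    (h0 : ∀ a, T a 0 0 = 1) (h00 : ∀ r s, r + s ≠ 0 → T 0 r s = 0)
    (hs : ∀ a r s, r + s ≠ 0 → T (a + 1) r s = ∑ b ∈ Finset.range s, ∑ b' ∈ Finset.range (r + 1),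
      qQ q a (b + 1) * qQ q b b' * t ^ ((s - (b + 1)) + (r - b')) * T b' (r - b') (s - (b + 1)))
    (r s : ℕ) : T 1 r (s + 1) = T 1 s (r + 1) := by
  have key : ∀ r s N, s + 1 ≤ N → T 1 r (s + 1) = qH q t N 0 s r := by
    intro r s N hN
    rw [qT_eq hq t T h0 h00 hs N 1 r (s + 1) hN, Finset.sum_range_succ', Finset.sum_eq_zero]
    · simp [gb_self hq]
    · intro k _
      rw [gb_lt q (by omega)]; simp
  rw [key r s (r + s + 1) (by omega), key s r (r + s + 1) (by omega), qH_symm]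


/-! ### Words -/

lemma cnt_add (c : Bool) (w : List Bool) : w.count c + w.count (!c) = w.length := by
  induction w with
  | nil => simp
  | cons x w ih => cases x <;> cases c <;> simp [List.count_cons] <;> simp only [Bool.not_true, Bool.not_false] at ih <;> omega

def cv (c : Bool) : List Bool → ℕ
  | [] => 0
  | x :: w => (if x = c then 0 else w.count c) + cv c w

lemma cv_append (c : Bool) (u v : List Bool) :
    cv c (u ++ v) = cv c u + cv c v + u.count (!c) * v.count c := by
  induction u with
  | nil => simp [cv]
  | cons x u ih =>
    simp only [List.cons_append, cv, ih, List.count_append]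
    cases x <;> cases c <;> simp <;> ring

lemma cv_compl (c : Bool) (w : List Bool) :
    cv c w + cv (!c) w = w.count c * w.count (!c) := by
  induction w with
  | nil => simp [cv]
  | cons x w ih =>
    cases x <;> cases c <;> simp [cv] at ih ⊢ <;> nlinarith

def spl (c : Bool) : ℕ → List Bool → List Bool × List Bool
  | _, [] => ([], [])
  | 0, x :: u => if x = c then ([], u) else (x :: (spl c 0 u).1, (spl c 0 u).2)
  | a + 1, x :: u => if x = c then (x :: (spl c a u).1, (spl c a u).2)
      else (x :: (spl c (a + 1) u).1, (spl c (a + 1) u).2)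

lemma spl_eq (c : Bool) (u1 u2 : List Bool) : ∀ a, u1.count c = a →
    spl c a (u1 ++ c :: u2) = (u1, u2) := by
  induction u1 with
  | nil => intro a h; simp at h; subst h; simp [spl]
  | cons x u ih =>
    intro a h
    by_cases hx : x = c
    · subst hx
      cases a with
      | zero => simp at h
      | succ a =>
        have := ih a (by simpa using h)
        simp [spl, this]
    · rw [List.count_cons_of_ne hx] at h
      have := ih a h
      cases a <;> simp [spl, hx, this]

lemma exists_spl (c : Bool) (u : List Bool) : ∀ a, a < u.count c →
    ∃ u1 u2, u = u1 ++ c :: u2 ∧ u1.count c = a := by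
  induction u with
  | nil => intro a h; simp at h
  | cons x u ih =>
    intro a h
    by_cases hx : x = c
    · subst hx
      cases a with
      | zero => exact ⟨[], u, by simp, by simp⟩
      | succ a =>
        obtain ⟨u1, u2, h1, h2⟩ := ih a (by simpa using h)
        exact ⟨x :: u1, u2, by simp [h1], by simp [h2]⟩
    · rw [List.count_cons_of_ne hx] at h
      obtain ⟨u1, u2, h1, h2⟩ := ih a h
      exact ⟨x :: u1, u2, by simp [h1], by rw [List.count_cons_of_ne hx, h2]⟩

lemma spl_len (c : Bool) (u : List Bool) : ∀ a, u ≠ [] → (spl c a u).2.length < u.length := by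
  induction u with
  | nil => intro a h; exact absurd rfl h
  | cons x u ih =>
    intro a _
    have key : ∀ a, (spl c a u).2.length ≤ u.length := by
      intro a
      by_cases hu : u = []
      · subst hu; cases a <;> simp [spl]
      · exact (ih a hu).le
    cases a with
    | zero =>
      have := key 0
      simp only [spl]; split_ifs <;> simp; omega
    | succ a =>
      have h1 := key a
      have h2 := key (a + 1)
      simp only [spl]; split_ifs <;> simp <;> omega

def ABf : ℕ → Bool → ℕ → List Bool → List Bool → ℕ × ℕ
  | 0, _, _, _, _ => (0, 0)
  | f + 1, c, a, u, l => if l = [] then (0, 0) else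
      (cv c (spl c (a - 1) u).1 +
        (ABf f (!c) ((spl c (a - 1) u).1.count (!c)) l (spl c (a - 1) u).2).1,
       (if c = true then 0 else (spl c (a - 1) u).2.length) +
        (ABf f (!c) ((spl c (a - 1) u).1.count (!c)) l (spl c (a - 1) u).2).2)

lemma ABf_nil (f : ℕ) (c : Bool) (a : ℕ) (u : List Bool) : ABf f c a u [] = (0, 0) := by
  cases f <;> simp [ABf]

lemma ABf_succ (f : ℕ) : ∀ (c : Bool) (a : ℕ) (u l : List Bool), u.length + l.length ≤ f →
    ABf (f + 1) c a u l = ABf f c a u l := by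
  induction f with
  | zero =>
    intro c a u l h
    have : l = [] := List.length_eq_zero_iff.mp (by omega)
    subst this; simp [ABf_nil]
  | succ f ih =>
    intro c a u l h
    by_cases hl : l = []
    · subst hl; simp [ABf_nil]
    by_cases hu : u = []
    · subst hu
      have : ∀ a, (spl c a ([] : List Bool)) = ([], []) := by intro a; cases a <;> rfl
      rw [ABf.eq_2, ABf.eq_2 c a [] l f]
      simp [this, ABf_nil]
    · have := spl_len c u (a - 1) hu
      rw [ABf, ABf.eq_2 c a u l f, ih _ _ _ _ (by omega)]

def AB (c : Bool) (a : ℕ) (u l : List Bool) : ℕ × ℕ := ABf (u.length + l.length) c a u l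

lemma ABf_eq (f : ℕ) (c : Bool) (a : ℕ) (u l : List Bool) (h : u.length + l.length ≤ f) :
    ABf f c a u l = AB c a u l := by
  induction f, h using Nat.le_induction with
  | base => rfl
  | succ f hf ih => rw [ABf_succ f _ _ _ _ hf, ih]

lemma AB_nil (c : Bool) (a : ℕ) (u : List Bool) : AB c a u [] = (0, 0) := ABf_nil _ _ _ _

lemma AB_step (c : Bool) (a : ℕ) (u1 u2 l : List Bool) (hl : l ≠ []) (h : u1.count c = a) :
    AB c (a + 1) (u1 ++ c :: u2) l =
      (cv c u1 + (AB (!c) (u1.count (!c)) l u2).1,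
       (if c = true then 0 else u2.length) + (AB (!c) (u1.count (!c)) l u2).2) := by
  rw [← ABf_eq ((u1 ++ c :: u2).length + l.length + 1) _ _ _ _ (by omega)]
  rw [ABf, if_neg hl]
  simp only [Nat.add_sub_cancel, spl_eq c u1 u2 a h]
  rw [ABf_eq _ _ _ _ _ (by simp; omega)]

def VV (c : Bool) (a : ℕ) (u l : List Bool) : Prop :=
  ∀ i < l.length, (u.take (a + i)).count c < a + (l.take i).count c

lemma VV_nil (c : Bool) (a : ℕ) (u : List Bool) : VV c a u [] := by
  intro i hi; simp at hi

lemma VV_step (c : Bool) (a : ℕ) (u1 u2 l : List Bool) (hl : l ≠ []) (h : u1.count c = a)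
    (hc : l.count c = u2.count c) (hn : l.count (!c) = u1.count (!c) + u2.count (!c)) :
    VV c (a + 1) (u1 ++ c :: u2) l ↔
      1 ≤ u1.count (!c) ∧ VV (!c) (u1.count (!c)) l u2 := by
  have L1 := cnt_add c u1
  have L2 := cnt_add c u2
  have L3 := cnt_add c l
  have tk : ∀ i, (u1 ++ c :: u2).take (a + 1 + (u1.count (!c) + i)) = u1 ++ c :: u2.take i := by
    intro i
    rw [show a + 1 + (u1.count (!c) + i) = u1.length + (i + 1) by omega]
    rw [List.take_length_add_append]
    simp
  have key : ∀ i < u2.length,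
      (((u1 ++ c :: u2).take (a + 1 + (u1.count (!c) + i))).count c <
        a + 1 + (l.take (u1.count (!c) + i)).count c ↔
      (l.take (u1.count (!c) + i)).count (!c) < u1.count (!c) + (u2.take i).count (!c)) := by
    intro i hi
    rw [tk]
    have e1 := cnt_add c (u2.take i)
    have e2 := cnt_add c (l.take (u1.count (!c) + i))
    rw [List.length_take] at e1 e2
    rw [List.count_append, List.count_cons_self]
    omega
  constructor
  · intro hV
    constructor
    · by_contra hb
      have hl0 : 0 < l.length := List.length_pos_iff.mpr hl
      have := hV 0 hl0
      have t0 := tk 0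
      rw [show a + 1 + (u1.count (!c) + 0) = a + 1 + 0 by omega] at t0
      rw [t0] at this
      simp [List.count_append] at this
      omega
    · intro i hi
      exact (key i hi).1 (hV _ (by omega))
  · rintro ⟨hb, hV⟩ i hi
    by_cases hib : i < u1.count (!c)
    · have : (u1 ++ c :: u2).take (a + 1 + i) = u1.take (a + 1 + i) := by
        rw [List.take_append_of_le_length (by omega)]
      rw [this]
      have := (List.take_sublist (a + 1 + i) u1).count_le c
      omega
    · obtain ⟨j, rfl⟩ := Nat.exists_eq_add_of_le (not_lt.mp hib)
      exact (key j (by omega)).2 (hV j (by omega))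

/-- area identity -/
lemma AB_area (N : ℕ) : ∀ (c : Bool) (a : ℕ) (u l : List Bool), u.length + l.length ≤ N → 1 ≤ a →
    u.count c = a + l.count c → u.count (!c) = l.count (!c) → VV c a u l →
    cv c u = (AB c a u l).1 + cv c l + l.length := by
  induction N with
  | zero =>
    intro c a u l h ha h1
    have : u = [] := List.length_eq_zero_iff.mp (by omega)
    subst this; simp at h1; omega
  | succ N ih =>
    intro c a u l h ha h1 h2 hV
    obtain ⟨a, rfl⟩ := Nat.exists_eq_add_of_le' ha
    by_cases hl : l = []
    · subst hl
      simp only [List.count_nil, Nat.add_zero] at h1 h2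
      have := cv_compl c u
      rw [h2] at this
      simp [AB_nil, cv]; simp at this; exact this.1
    obtain ⟨u1, u2, rfl, hu1⟩ := exists_spl c u a (by omega)
    have hc : l.count c = u2.count c := by
      simp at h1; omega
    have hn : l.count (!c) = u1.count (!c) + u2.count (!c) := by
      simp at h2; omega
    rw [VV_step c a u1 u2 l hl hu1 hc hn] at hV
    have I := ih (!c) (u1.count (!c)) l u2 (by simp at h; omega) hV.1 hn
      (by simpa using hc) hV.2
    rw [AB_step c a u1 u2 l hl hu1]
    rw [cv_append]
    have e1 := cv_compl c l
    have e2 := cv_compl c u2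
    have L2 := cnt_add c u2
    have L3 := cnt_add c l
    rw [hc, hn] at e1
    simp only [cv, if_true, List.count_cons_self]
    rw [mul_add] at e1 ⊢
    have e3 : u2.count c * u1.count (!c) = u1.count (!c) * u2.count c := mul_comm _ _
    omega

noncomputable def W (c : Bool) (a b : ℕ) : Finset (List Bool) :=
  Set.Finite.toFinset (s := {w : List Bool | w.count c = a ∧ w.count (!c) = b})
    ((List.finite_length_eq Bool (a + b)).subset (by
      rintro w ⟨h1, h2⟩
      have := cnt_add c w
      simp only [Set.mem_ofPred_eq]; omega))

lemma mem_W {c : Bool} {a b : ℕ} {w : List Bool} :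
    w ∈ W c a b ↔ w.count c = a ∧ w.count (!c) = b := by simp [W]

lemma W_not (c : Bool) (a b : ℕ) : W (!c) a b = W c b a := by
  ext w; simp [mem_W, and_comm]

lemma W_zero (c : Bool) (a : ℕ) : W c a 0 = {List.replicate a c} := by
  ext w
  simp only [mem_W, Finset.mem_singleton]
  constructor
  · rintro ⟨h1, h2⟩
    rw [List.eq_replicate_iff]
    have := cnt_add c w
    refine ⟨by omega, fun b hb => ?_⟩
    by_contra hne
    have : b = !c := by cases b <;> cases c <;> simp_all
    subst this
    exact (List.count_pos_iff.mpr hb).ne' h2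
  · rintro rfl
    cases c <;> simp [List.count_replicate]

lemma W_zero' (c : Bool) (b : ℕ) : W c 0 b = {List.replicate b (!c)} := by
  rw [← W_zero, W_not]

lemma sum_W_succ (c : Bool) (a b : ℕ) (φ : List Bool → ℝ) :
    ∑ w ∈ W c (a + 1) (b + 1), φ w =
      ∑ w ∈ W c a (b + 1), φ (c :: w) + ∑ w ∈ W c (a + 1) b, φ ((!c) :: w) := by
  have : W c (a + 1) (b + 1) = (W c a (b + 1)).image (fun w => c :: w) ∪
      (W c (a + 1) b).image (fun w => (!c) :: w) := by
    ext w
    simp only [mem_W, Finset.mem_union, Finset.mem_image]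
    constructor
    · rintro ⟨h1, h2⟩
      cases w with
      | nil => simp at h1
      | cons x w =>
        by_cases hx : x = c
        · subst hx
          left; exact ⟨w, ⟨by simpa using h1, by simpa using h2⟩, rfl⟩
        · have : x = !c := by cases x <;> cases c <;> simp_all
          subst this
          right; exact ⟨w, ⟨by simpa using h1, by simpa using h2⟩, rfl⟩
    · rintro (⟨w, ⟨h1, h2⟩, rfl⟩ | ⟨w, ⟨h1, h2⟩, rfl⟩) <;> simp [h1, h2]
  rw [this, Finset.sum_union, Finset.sum_image, Finset.sum_image]
  · intro x _ y _ h; simpa using h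
  · intro x _ y _ h; simpa using h
  · rw [Finset.disjoint_left]
    intro w h1 h2
    simp only [Finset.mem_image] at h1 h2
    obtain ⟨x, _, rfl⟩ := h1
    obtain ⟨y, _, h⟩ := h2
    simp at h

lemma cv_replicate (c : Bool) (a : ℕ) : cv c (List.replicate a c) = 0 := by
  induction a with
  | zero => rfl
  | succ a ih => simp [List.replicate_succ, cv, ih]

lemma cv_replicate' (c : Bool) (a : ℕ) : cv c (List.replicate a (!c)) = 0 := by
  induction a with
  | zero => rfl
  | succ a ih => simp [List.replicate_succ, cv, ih, List.count_replicate]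

lemma sum_W_cv {q : ℝ} (hq : 0 < q) (c : Bool) : ∀ (N a b : ℕ), a + b ≤ N →
    ∑ w ∈ W c a b, q ^ cv c w = qQ q a b := by
  intro N
  induction N with
  | zero =>
    intro a b h
    obtain ⟨rfl, rfl⟩ : a = 0 ∧ b = 0 := by omega
    rw [W_zero, qQ_zero_left hq]; simp [cv]
  | succ N ih =>
    intro a b h
    cases b with
    | zero => rw [W_zero, qQ_zero_right hq]; simp [cv_replicate]
    | succ b =>
      cases a with
      | zero => rw [W_zero', qQ_zero_left hq]; simp [cv_replicate']
      | succ a =>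
        rw [sum_W_succ, qQ_succ hq, ← ih a (b + 1) (by omega), ← ih (a + 1) b (by omega)]
        congr 1
        · simp [cv]
        · rw [Finset.mul_sum]
          refine Finset.sum_congr rfl fun w hw => ?_
          rw [mem_W] at hw
          simp [cv, hw.1, pow_add]

lemma sum_W_split (c : Bool) (a r s : ℕ) (φ : List Bool → ℝ) :
    ∑ w ∈ W c (a + 1 + r) s, φ w = ∑ b ∈ Finset.range (s + 1),
      ∑ u1 ∈ W c a b, ∑ u2 ∈ W c r (s - b), φ (u1 ++ c :: u2) := by
  simp_rw [← Finset.sum_product']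
  rw [Finset.sum_sigma']
  symm
  refine Finset.sum_bij (fun x _ => x.2.1 ++ c :: x.2.2) ?_ ?_ ?_ ?_
  · rintro ⟨b, u1, u2⟩ h
    simp only [Finset.mem_sigma, Finset.mem_range, Finset.mem_product, mem_W] at h
    obtain ⟨hb, ⟨h1, h2⟩, h3, h4⟩ := h
    rw [mem_W]
    constructor
    · simp; omega
    · simp; omega
  · rintro ⟨b, u1, u2⟩ h ⟨b', v1, v2⟩ h' heq
    simp only [Finset.mem_sigma, Finset.mem_range, Finset.mem_product, mem_W] at h h'
    obtain ⟨hb, ⟨h1, h2⟩, h3, h4⟩ := h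
    obtain ⟨hb', ⟨h1', h2'⟩, h3', h4'⟩ := h'
    simp only at heq
    have e1 := spl_eq c u1 u2 a h1
    have e2 := spl_eq c v1 v2 a h1'
    rw [heq, e2] at e1
    simp only [Prod.mk.injEq] at e1
    obtain ⟨rfl, rfl⟩ := e1
    have : b = b' := by omega
    subst this; rfl
  · intro w hw
    rw [mem_W] at hw
    obtain ⟨u1, u2, rfl, hu⟩ := exists_spl c w a (by omega)
    simp at hw
    refine ⟨⟨u1.count (!c), u1, u2⟩, ?_, rfl⟩
    simp only [Finset.mem_sigma, Finset.mem_range, Finset.mem_product, mem_W]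
    refine ⟨by omega, ⟨hu, trivial⟩, by omega, by omega⟩
  · intros; rfl

open Classical in
noncomputable def wt (q t : ℝ) (c : Bool) (a : ℕ) (u l : List Bool) : ℝ :=
  if VV c a u l then q ^ (AB c a u l).1 * t ^ (AB c a u l).2 else 0

noncomputable def GS (q t : ℝ) (c : Bool) (a r s : ℕ) : ℝ :=
  ∑ u ∈ W c (a + r) s, ∑ l ∈ W c r s, wt q t c a u l

lemma GS_zero (q t : ℝ) (c : Bool) (a : ℕ) : GS q t c a 0 0 = 1 := by
  simp [GS, W_zero, wt, VV_nil, AB_nil]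

lemma GS_step {q : ℝ} (hq : 0 < q) (t : ℝ) (c : Bool) (a r s : ℕ) (hrs : r + s ≠ 0) :
    GS q t c (a + 1) r s = ∑ b ∈ Finset.range s, qQ q a (b + 1) *
      (if c = true then 1 else t ^ (r + (s - (b + 1)))) * GS q t (!c) (b + 1) (s - (b + 1)) r := by
  have hw : ∀ b u1 u2 l, b ≤ s → u1 ∈ W c a b → u2 ∈ W c r (s - b) → l ∈ W c r s →
      wt q t c (a + 1) (u1 ++ c :: u2) l = if b = 0 then 0 else
        q ^ cv c u1 * ((if c = true then 1 else t ^ (r + (s - b))) * wt q t (!c) b l u2) := by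
    intro b u1 u2 l hb h1 h2 h3
    rw [mem_W] at h1 h2 h3
    have hl : l ≠ [] := by
      rintro rfl
      simp at h3; omega
    have L2 := cnt_add c u2
    unfold wt
    rw [VV_step c a u1 u2 l hl h1.1 (by omega) (by omega), AB_step c a u1 u2 l hl h1.1, h1.2]
    by_cases hb0 : b = 0
    · simp [hb0]
    · rw [if_neg hb0]
      have : 1 ≤ b := by omega
      have hlen : u2.length = r + (s - b) := by omega
      rw [hlen]
      by_cases hV : VV (!c) b l u2
      · rw [if_pos ⟨this, hV⟩, if_pos hV]
        by_cases hc : c = true <;> simp [hc, pow_add] <;> ring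
      · rw [if_neg (fun h => hV h.2), if_neg hV]
        simp
  unfold GS
  rw [sum_W_split]
  have h1 : ∀ b ∈ Finset.range (s + 1), (∑ u1 ∈ W c a b, ∑ u2 ∈ W c r (s - b), ∑ l ∈ W c r s,
      wt q t c (a + 1) (u1 ++ c :: u2) l) = if b = 0 then 0 else qQ q a b *
      ((if c = true then 1 else t ^ (r + (s - b))) *
        ∑ l ∈ W (!c) s r, ∑ u2 ∈ W (!c) (s - b) r, wt q t (!c) b l u2) := by
    intro b hb
    simp only [Finset.mem_range] at hb
    have : ∀ u1 ∈ W c a b, (∑ u2 ∈ W c r (s - b), ∑ l ∈ W c r s,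
      wt q t c (a + 1) (u1 ++ c :: u2) l) = if b = 0 then 0 else q ^ cv c u1 *
      ((if c = true then 1 else t ^ (r + (s - b))) *
        ∑ l ∈ W (!c) s r, ∑ u2 ∈ W (!c) (s - b) r, wt q t (!c) b l u2) := by
      intro u1 hu1
      rw [Finset.sum_comm, W_not, W_not]
      by_cases hb0 : b = 0
      · rw [if_pos hb0]
        refine Finset.sum_eq_zero fun l hl => Finset.sum_eq_zero fun u2 hu2 => ?_
        rw [hw b u1 u2 l (by omega) hu1 hu2 hl, if_pos hb0]
      · rw [if_neg hb0, Finset.mul_sum, Finset.mul_sum]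
        refine Finset.sum_congr rfl fun l hl => ?_
        rw [Finset.mul_sum, Finset.mul_sum]
        refine Finset.sum_congr rfl fun u2 hu2 => ?_
        rw [hw b u1 u2 l (by omega) hu1 hu2 hl, if_neg hb0]
    rw [Finset.sum_congr rfl this]
    by_cases hb0 : b = 0
    · simp [hb0]
    · simp only [if_neg hb0]
      rw [← Finset.sum_mul, sum_W_cv hq c _ _ _ le_rfl]
  rw [Finset.sum_congr rfl h1, Finset.sum_range_succ']
  simp only [if_true, add_zero]
  refine Finset.sum_congr rfl fun b hb => ?_
  simp only [Finset.mem_range] at hb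
  rw [if_neg (by omega), show b + 1 + (s - (b + 1)) = s by omega]
  ring

lemma GS_symm {q : ℝ} (hq : 0 < q) (t : ℝ) (r s : ℕ) :
    GS q t true 1 r (s + 1) = GS q t true 1 s (r + 1) := by
  have := qT_symm hq t (fun a r s => if a = 0 then (if r + s = 0 then 1 else 0) else GS q t true a r s)
    ?_ ?_ ?_ r s
  · simpa using this
  · intro a
    by_cases ha : a = 0 <;> simp [ha, GS_zero]
  · intro r s h
    simp; omega
  · intro a r s h
    rw [if_neg (by omega), GS_step hq _ _ _ _ _ h]
    refine Finset.sum_congr rfl fun b hb => ?_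
    simp only [Finset.mem_range] at hb
    rw [Finset.sum_range_succ']
    by_cases h0 : (s - (b + 1)) + r = 0
    · obtain ⟨h1, rfl⟩ : s - (b + 1) = 0 ∧ r = 0 := by omega
      simp [h1, GS_zero, qQ_zero_right hq]
    · simp only [if_true]
      rw [if_neg (show ¬ (r - 0 + (s - (b + 1)) = 0) by omega)]
      rw [GS_step hq _ _ _ _ _ h0, Finset.mul_sum]
      simp only [mul_zero, add_zero, Bool.not_true, Bool.not_false]
      refine Finset.sum_congr rfl fun b' _ => ?_
      simp
      ring


open Classical in
noncomputable def KS (r s : ℕ) : Finset (List Bool × List Bool) :=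
  (W true (1 + r) s ×ˢ W true r s).filter (fun p => VV true 1 p.1 p.2)

lemma mem_KS {r s : ℕ} {p : List Bool × List Bool} : p ∈ KS r s ↔
    (p.1.count true = 1 + r ∧ p.1.count false = s) ∧ (p.2.count true = r ∧ p.2.count false = s) ∧
      VV true 1 p.1 p.2 := by
  simp [KS, mem_W, and_assoc]

lemma GS_KS (q t : ℝ) (r s : ℕ) : GS q t true 1 r s =
    ∑ p ∈ KS r s, q ^ (AB true 1 p.1 p.2).1 * t ^ (AB true 1 p.1 p.2).2 := by
  unfold GS KS
  rw [← Finset.sum_product', Finset.sum_filter]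
  rfl

open Polynomial in
lemma KS_card (r s u v : ℕ) :
    ((KS r (s + 1)).filter (fun p => AB true 1 p.1 p.2 = (u, v))).card =
    ((KS s (r + 1)).filter (fun p => AB true 1 p.1 p.2 = (u, v))).card := by
  obtain ⟨N, hN⟩ : ∃ N, u < N ∧ ∀ p ∈ KS r (s + 1) ∪ KS s (r + 1), (AB true 1 p.1 p.2).1 < N := by
    refine ⟨u + (KS r (s + 1) ∪ KS s (r + 1)).sup (fun p => (AB true 1 p.1 p.2).1) + 1, by omega, ?_⟩
    intro p hp
    have := Finset.le_sup (f := fun p : List Bool × List Bool => (AB true 1 p.1 p.2).1) hp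
    omega
  let F : ℕ → ℕ → ℝ[X] := fun r s => ∑ p ∈ KS r s, X ^ ((AB true 1 p.1 p.2).1 + N * (AB true 1 p.1 p.2).2)
  have hF : F r (s + 1) = F s (r + 1) := by
    apply Polynomial.eq_of_infinite_eval_eq
    apply (Set.Ioi_infinite (0 : ℝ)).mono
    intro q hq
    have := GS_symm hq (q ^ N) r s
    rw [GS_KS, GS_KS] at this
    simp only [Set.mem_ofPred_eq, F, eval_finsetSum, eval_pow, eval_mul, eval_X, pow_add, pow_mul]
    exact this
  have hc : ∀ r' s', (∀ p ∈ KS r' s', (AB true 1 p.1 p.2).1 < N) → (F r' s').coeff (u + N * v) =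
      ((KS r' s').filter (fun p => AB true 1 p.1 p.2 = (u, v))).card := by
    intro r' s' h
    simp only [F, finsetSum_coeff, coeff_X_pow]
    rw [Finset.sum_boole]
    congr 2
    apply Finset.filter_congr
    intro p hp
    have h1 := h p hp
    have h2 := hN.1
    generalize AB true 1 p.1 p.2 = x at *
    obtain ⟨a, b⟩ := x
    simp only [Prod.mk.injEq] at *
    constructor
    · intro he
      have e1 : (u + N * v) % N = u := by rw [Nat.add_mul_mod_self_left, Nat.mod_eq_of_lt h2]
      have e2 : (a + N * b) % N = a := by rw [Nat.add_mul_mod_self_left, Nat.mod_eq_of_lt h1]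
      have : a = u := by rw [← e1, ← e2, he]
      subst this
      have : N * v = N * b := by omega
      exact ⟨rfl, (Nat.eq_of_mul_eq_mul_left (by omega) this).symm⟩
    · rintro ⟨rfl, rfl⟩; rfl
  have := hc r (s + 1) (fun p hp => hN.2 p (Finset.mem_union_left _ hp))
  rw [hF, hc s (r + 1) (fun p hp => hN.2 p (Finset.mem_union_right _ hp))] at this
  exact_mod_cast this.symm


lemma card_bij_aux {α β : Type*} (p : α → Prop) (F : Finset β) (f : α → β)
    (h1 : ∀ a, p a → f a ∈ F) (inj : ∀ a b, p a → p b → f a = f b → a = b)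
    (surj : ∀ b ∈ F, ∃ a, p a ∧ f a = b) : Nat.card {a // p a} = F.card := by
  let g : {a // p a} → {b // b ∈ F} := fun a => ⟨f a.1, h1 a.1 a.2⟩
  have hg : Function.Bijective g := by
    constructor
    · intro a b h
      exact Subtype.ext (inj _ _ a.2 b.2 (congrArg Subtype.val h))
    · rintro ⟨b, hb⟩
      obtain ⟨a, ha, rfl⟩ := surj b hb
      exact ⟨⟨a, ha⟩, rfl⟩
  rw [Nat.card_congr (Equiv.ofBijective g hg)]
  simp

def fb (w : List Bool) : List Step := w.map (fun b => if b = true then Step.E else Step.N)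
def tb (w : List Step) : List Bool := w.map (fun s => decide (s = Step.E))

lemma fb_tb (w : List Step) : fb (tb w) = w := by
  induction w with
  | nil => rfl
  | cons x w ih => cases x <;> simp_all [fb, tb]

lemma tb_fb (w : List Bool) : tb (fb w) = w := by
  induction w with
  | nil => rfl
  | cons x w ih => cases x <;> simp_all [fb, tb]

lemma countE_fb (w : List Bool) : countE (fb w) = w.count true := by
  induction w with
  | nil => rfl
  | cons x w ih => cases x <;> simp_all [fb, countE]

lemma countN_fb (w : List Bool) : countN (fb w) = w.count false := by
  induction w with
  | nil => rfl
  | cons x w ih => cases x <;> simp_all [fb, countN]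

lemma colAux_split (w1 w2 : List Bool) : ∀ h, (colHeightsAux (fb (w1 ++ true :: w2)) h).getD
    (w1.count true) 0 = h + w1.count false := by
  induction w1 with
  | nil => intro h; simp [fb, colHeightsAux]
  | cons x w ih =>
    intro h
    cases x
    · have := ih (h + 1)
      simp [fb, colHeightsAux] at this ⊢
      omega
    · have := ih h
      simp [fb, colHeightsAux] at this ⊢
      omega

lemma col_split (w1 w2 : List Bool) (i : ℕ) (hi : w1.count true = i) :
    colHeight (fb (w1 ++ true :: w2)) i = w1.count false := by
  subst hi
  have := colAux_split w1 w2 0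
  simpa [colHeight] using this

lemma colAux_len (w : List Bool) : ∀ h, (colHeightsAux (fb w) h).length = w.count true := by
  induction w with
  | nil => intro h; rfl
  | cons x w ih =>
    intro h
    cases x
    · have := ih (h + 1)
      simp [fb, colHeightsAux] at this ⊢
      omega
    · have := ih h
      simp [fb, colHeightsAux] at this ⊢
      omega

lemma colAux_sum (w : List Bool) : ∀ h, (colHeightsAux (fb w) h).sum =
    h * w.count true + cv true w := by
  induction w with
  | nil => intro h; simp [fb, colHeightsAux, cv]
  | cons x w ih =>
    intro h
    cases x
    · have := ih (h + 1)
      simp [fb, colHeightsAux, cv] at this ⊢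
      rw [this]; ring
    · have := ih h
      simp [fb, colHeightsAux, cv] at this ⊢
      rw [this]; ring

lemma sum_getD (l : List ℕ) : ∑ i ∈ Finset.range l.length, l.getD i 0 = l.sum := by
  induction l with
  | nil => simp
  | cons x l ih =>
    rw [List.length_cons, Finset.sum_range_succ']
    simp only [List.getD_cons_succ, List.getD_cons_zero, List.sum_cons]
    rw [ih]; ring

lemma col_sum (w : List Bool) (m : ℕ) (h : w.count true = m) :
    ∑ i ∈ Finset.range m, colHeight (fb w) i = cv true w := by
  subst h
  have := sum_getD (colHeightsAux (fb w) 0)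
  rw [colAux_len, colAux_sum] at this
  simpa [colHeight] using this

lemma take_fb (w : List Bool) (j : ℕ) : (fb w).take j = fb (w.take j) := by
  simp [fb, List.map_take]

lemma mem_pathPts (w : List Bool) (x y : ℕ) : (x, y) ∈ pathPts (fb w) ↔
    ∃ j ≤ w.length, (w.take j).count true = x ∧ (w.take j).count false = y := by
  simp only [pathPts, pathPos, take_fb, countE_fb, countN_fb]
  simp [fb]

lemma cnt_tf (w : List Bool) : w.count true + w.count false = w.length := by
  exact cnt_add true w

lemma cnt_take (w : List Bool) (j : ℕ) (h : j ≤ w.length) :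
    (w.take j).count true + (w.take j).count false = j := by
  rw [cnt_tf, List.length_take]; omega

lemma pp_cond (U L : List Bool) (m n : ℕ) (hm : 1 ≤ m) (hU1 : U.count true = m)
    (hU2 : U.count false = n) (hL1 : L.count true = m) (hL2 : L.count false = n) :
    ((∀ i < m, colHeight (fb L) i ≤ colHeight (fb U) i) ∧
      pathPts (fb U) ∩ pathPts (fb L) = {(0, 0), (m, n)}) ↔
    ∀ j, 0 < j → j < m + n → (U.take j).count true < (L.take j).count true := by
  have lU := cnt_tf U
  have lL := cnt_tf L
  constructor
  · rintro ⟨ha, hm⟩ j hj1 hj2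
    have cU := cnt_take U j (by omega)
    have cL := cnt_take L j (by omega)
    by_contra hcon
    have hne : (U.take j).count true ≠ (L.take j).count true := by
      intro he
      have : ((U.take j).count true, (U.take j).count false) ∈
          pathPts (fb U) ∩ pathPts (fb L) := by
        rw [Finset.mem_inter, mem_pathPts, mem_pathPts]
        exact ⟨⟨j, by omega, rfl, rfl⟩, ⟨j, by omega, by omega, by omega⟩⟩
      rw [hm] at this
      simp at this
      omega
    have hlt : (L.take j).count true < (U.take j).count true := by omega
    have hlt2 := (List.take_sublist j U).count_le true
    obtain ⟨u1, u2, hu, hu1⟩ := exists_spl true (U.take j) ((L.take j).count true) hlt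
    have hdL : L.take j ++ L.drop j = L := List.take_append_drop j L
    have hdU : U.take j ++ U.drop j = U := List.take_append_drop j U
    have hcd : (L.take j).count true + (L.drop j).count true = L.count true := by
      rw [← List.count_append, hdL]
    obtain ⟨l1, l2, hl, hl1⟩ := exists_spl true (L.drop j) 0 (by omega)
    have h := ha ((L.take j).count true) (by omega)
    have eU : U = u1 ++ true :: (u2 ++ U.drop j) := by
      conv_lhs => rw [← hdU, hu]
      simp
    have eL : L = (L.take j ++ l1) ++ true :: l2 := by
      conv_lhs => rw [← hdL, hl]
      simp
    have k1 : colHeight (fb U) ((L.take j).count true) = u1.count false := by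
      conv_lhs => rw [eU]
      exact col_split _ _ _ hu1
    have k2 : colHeight (fb L) ((L.take j).count true) = (L.take j).count false + l1.count false := by
      have := col_split (L.take j ++ l1) l2 ((L.take j).count true) (by simp [hl1])
      rw [← eL] at this
      rw [this]
      simp
    rw [k1, k2] at h
    have := congrArg (List.count false) hu
    simp at this
    omega
  · intro hj
    constructor
    · intro i hi
      obtain ⟨u1, u2, hu, hu1⟩ := exists_spl true U i (by omega)
      obtain ⟨l1, l2, hl, hl1⟩ := exists_spl true L i (by omega)
      have k1 : colHeight (fb U) i = u1.count false := by rw [hu]; exact col_split _ _ _ hu1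
      have k2 : colHeight (fb L) i = l1.count false := by rw [hl]; exact col_split _ _ _ hl1
      rw [k1, k2]
      by_contra hcon
      have a1 := cnt_tf u1
      have a2 := cnt_tf l1
      have a3 : L.length = l1.length + (l2.length + 1) := by rw [hl]; simp
      have := hj (u1.length + 1) (by omega) (by omega)
      have e1 : U.take (u1.length + 1) = u1 ++ [true] := by
        rw [hu, List.take_length_add_append]; simp
      have e2 : L.take (u1.length + 1) = l1.take (u1.length + 1) := by
        rw [hl, List.take_append_of_le_length (by omega)]
      rw [e1, e2] at this
      have b := (List.take_sublist (u1.length + 1) l1).count_le true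
      simp at this
      omega
    · ext ⟨x, y⟩
      rw [Finset.mem_inter, mem_pathPts, mem_pathPts]
      simp only [Finset.mem_insert, Finset.mem_singleton, Prod.mk.injEq]
      constructor
      · rintro ⟨⟨j, h1, h2, h3⟩, ⟨j', h1', h2', h3'⟩⟩
        have cU := cnt_take U j h1
        have cL := cnt_take L j' h1'
        have : j = j' := by omega
        subst this
        by_cases h0 : j = 0
        · left; omega
        · by_cases h4 : j = m + n
          · right
            rw [List.take_of_length_le (by omega)] at h2 h3
            omega
          · have := hj j (by omega) (by omega)
            omega
      · rintro (⟨rfl, rfl⟩ | ⟨rfl, rfl⟩)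
        · exact ⟨⟨0, by omega, by simp⟩, ⟨0, by omega, by simp⟩⟩
        · exact ⟨⟨U.length, le_rfl, by simp [hU1, hU2]⟩, ⟨L.length, le_rfl, by simp [hL1, hL2]⟩⟩

lemma eastTarget_eq (hL : ℕ → ℕ) (m x y X : ℕ) (h1 : x ≤ X) (h2 : X ≤ m)
    (h3 : ∀ i, x ≤ i → i < X → hL i < y) (h4 : X < m → y ≤ hL X) :
    eastTarget hL m x y = X := by
  unfold eastTarget
  obtain ⟨d, rfl⟩ := Nat.exists_eq_add_of_le h2
  rw [List.range_add, List.filter_append]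
  have : (List.range X).filter (fun i => decide (x ≤ i ∧ y ≤ hL i)) = [] := by
    rw [List.filter_eq_nil_iff]
    intro i hi
    simp only [List.mem_range] at hi
    simp only [decide_eq_true_eq, not_and, not_le]
    intro hx; exact h3 i hx hi
  rw [this]
  cases d with
  | zero => simp
  | succ d =>
    rw [List.range_succ_eq_map]
    have := h4 (by omega)
    simp [h1, this]

lemma bounceAux_done (hU hL : ℕ → ℕ) (m n f j : ℕ) : bounceAux hU hL m n f m n j = 0 := by
  cases f <;> simp [bounceAux]

lemma bounce_main (m n : ℕ) (U L : List Bool) : ∀ (f x y j a : ℕ) (U0 u L0 l : List Bool),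
    l.length < f → U = U0 ++ u → L = L0 ++ l → U.count true = m → U.count false = n →
    L.count true = m → L.count false = n →
    U0.count true + a = x → U0.count false = y → L0.count true = x → L0.count false = y →
    1 ≤ a → VV true a u l →
    bounceAux (colHeight (fb U)) (colHeight (fb L)) m n f x y j =
      (j + 1) * l.length + (AB true a u l).2 := by
  intro f
  induction f with
  | zero => intros; omega
  | succ f ih =>
    intro x y j a U0 u L0 l hf hU hL hU1 hU2 hL1 hL2 c1 c2 c3 c4 ha hV
    have q1 := hU1; have q2 := hU2; have q3 := hL1; have q4 := hL2
    rw [hU, List.count_append] at q1 q2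
    rw [hL, List.count_append] at q3 q4
    have ll := cnt_tf l
    by_cases hl : l = []
    · subst hl
      simp at q3 q4
      obtain ⟨rfl, rfl⟩ : x = m ∧ y = n := by omega
      rw [bounceAux_done]; simp [AB_nil]
    have hl0 : 0 < l.length := List.length_pos_iff.mpr hl
    obtain ⟨a, rfl⟩ := Nat.exists_eq_add_of_le' ha
    obtain ⟨u1, u2, rfl, hu1⟩ := exists_spl true u a (by omega)
    have d1 : l.count true = u2.count true := by simp at q1; omega
    have d2 : l.count false = u1.count false + u2.count false := by simp at q2; omega
    rw [VV_step true a u1 u2 l hl hu1 d1 (by simpa using d2)] at hV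
    simp only [Bool.not_true] at hV
    rw [AB_step true a u1 u2 l hl hu1]
    simp only [Bool.not_true, if_true, Nat.zero_add]
    obtain ⟨hb, hV⟩ := hV
    have hy : colHeight (fb U) (x - 1) = y + u1.count false := by
      rw [hU, ← List.append_assoc, col_split _ _ _ (by simp; omega)]
      simp; omega
    rw [bounceAux, if_neg (by omega)]
    simp only [hy]
    -- second step
    obtain ⟨b, hb'⟩ := Nat.exists_eq_add_of_le' hb
    by_cases hu2 : u2 = []
    · subst hu2
      simp at d1 d2
      have e : y + u1.count false = n := by omega
      rw [if_pos e, e, bounceAux_done, AB_nil]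
      simp
      omega
    obtain ⟨l1, l2, rfl, hl1⟩ := exists_spl false l b (by omega)
    rw [hb'] at hV
    rw [VV_step false b l1 l2 u2 hu2 hl1 (by simp at d2; omega) (by simp at d1; simp; omega)] at hV
    rw [hb', AB_step false b l1 l2 u2 hu2 hl1]
    simp only [Bool.not_false] at hV ⊢
    have lu2 := cnt_tf u2
    have ll1 := cnt_tf l1
    have ll2 := cnt_tf l2
    simp at d1 d2 q1 q2 q3 q4 ll hf
    obtain ⟨ha', hV⟩ := hV
    have hx : (if y + (b + 1) = n then m else eastTarget (colHeight (fb L)) m x (y + (b + 1))) =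
        x + l1.count true := by
      by_cases e : y + (b + 1) = n
      · rw [if_pos e]
        by_cases hl2 : l2 = []
        · subst hl2; simp at q3; omega
        · have := hV 0 (List.length_pos_iff.mpr hl2)
          have cc := cnt_tf (u2.take (l1.count true + 0))
          have c0 := (List.take_sublist (l1.count true + 0) u2).count_le false
          rw [List.length_take] at cc
          simp only [List.take_zero, List.count_nil, Nat.add_zero] at this cc c0
          omega
      · rw [if_neg e]
        apply eastTarget_eq
        · omega
        · omega
        · intro i hi1 hi2
          obtain ⟨w1, w2, hw, hw1⟩ := exists_spl true l1 (i - x) (by omega)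
          have : L = (L0 ++ w1) ++ true :: (w2 ++ false :: l2) := by rw [hL, hw]; simp
          rw [this, col_split _ _ _ (by simp; omega)]
          have := congrArg (List.count false) hw
          simp at this ⊢
          omega
        · intro hlt
          obtain ⟨w1, w2, hw, hw1⟩ := exists_spl true l2 0 (by omega)
          have : L = (L0 ++ l1 ++ false :: w1) ++ true :: w2 := by rw [hL, hw]; simp
          rw [this, col_split _ _ _ (by simp; omega)]
          simp; omega
    rw [hx]
    rw [ih (x + l1.count true) (y + (b + 1)) (j + 1) (l1.count true) (U0 ++ u1 ++ [true]) u2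
      (L0 ++ l1 ++ [false]) l2 (by omega) (by rw [hU]; simp) (by rw [hL]; simp) hU1 hU2 hL1 hL2
      (by simp; omega) (by simp; omega) (by simp; omega) (by simp; omega) ha' hV]
    simp only [List.length_append, List.length_cons]
    rw [show y + (b + 1) - y = b + 1 by omega, show x + l1.count true - x = l1.count true by omega,
      show l1.length = l1.count true + b by omega]
    simp
    ring


lemma VV_of (U l : List Bool) (N : ℕ) (hN : l.length + 1 = N) :
    VV true 1 U l ↔ ∀ j, 0 < j → j < N → (U.take j).count true < ((true :: l).take j).count true := by
  constructor
  · intro h j h1 h2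
    obtain ⟨i, rfl⟩ := Nat.exists_eq_add_of_le' h1
    have := h i (by omega)
    rw [Nat.add_comm 1 i] at this
    simp; omega
  · intro h i hi
    have := h (i + 1) (by omega) (by omega)
    rw [Nat.add_comm 1 i]
    simp at this; omega

lemma pp_struct {m n : ℕ} (hm : 1 ≤ m) (hn : 1 ≤ n) (P : Polyomino m n) :
    ∃ U l, P.upper = fb U ∧ P.lower = fb (true :: l) ∧ (U, l) ∈ KS (m - 1) n ∧
      (area P, bounce P) = AB true 1 U l := by
  obtain ⟨lower, upper, h1, h2, h3, h4, h5, h6⟩ := P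
  obtain ⟨U, rfl⟩ : ∃ U, upper = fb U := ⟨tb upper, (fb_tb _).symm⟩
  obtain ⟨L, rfl⟩ : ∃ U, lower = fb U := ⟨tb lower, (fb_tb _).symm⟩
  have h1' := h1; have h2' := h2; have h3' := h3; have h4' := h4
  rw [countE_fb] at h1' h3'
  rw [countN_fb] at h2' h4'
  have hc := (pp_cond U L m n hm h3' h4' h1' h2').1 ⟨h5, h6⟩
  obtain ⟨l, rfl⟩ : ∃ l, L = true :: l := by
    cases L with
    | nil => simp at h1'; omega
    | cons x l =>
      cases x
      · have := hc 1 (by omega) (by omega)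
        simp at this
      · exact ⟨l, rfl⟩
  have ll := cnt_tf l
  simp at h1' h2'
  have hV : VV true 1 U l := (VV_of U l (m + n) (by omega)).2 hc
  refine ⟨U, l, rfl, rfl, ?_, ?_⟩
  · rw [mem_KS]
    exact ⟨⟨by simp only; omega, h4'⟩, ⟨by simp only; omega, h2'⟩, hV⟩
  · have hA := AB_area _ true 1 U l le_rfl le_rfl (by omega) (by simp; omega) hV
    have hB := bounce_main m n U (true :: l) (m + n + 2) 1 0 0 1 [] U [true] l (by omega) rfl rfl
      h3' h4' (by simpa using h1') (by simpa using h2') (by simp) (by simp) (by simp) (by simp) le_rfl hV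
    ext
    · simp only [area]
      have := Finset.sum_tsub_distrib (Finset.range m) (f := colHeight (fb U))
        (g := colHeight (fb (true :: l))) (fun i hi => h5 i (Finset.mem_range.mp hi))
      rw [this, col_sum U m h3', col_sum (true :: l) m (by simpa using h1')]
      simp [cv]; omega
    · simp only [bounce]
      rw [hB]; omega

lemma pp_card (m n u v : ℕ) (hm : 1 ≤ m) (hn : 1 ≤ n) :
    Nat.card {P : Polyomino m n // area P = u ∧ bounce P = v} =
    ((KS (m - 1) n).filter (fun p => AB true 1 p.1 p.2 = (u, v))).card := by
  have ftb : ∀ U, tb (fb U) = U := tb_fb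
  apply card_bij_aux _ _ (fun P => (tb P.upper, (tb P.lower).tail))
  · rintro P ⟨h1, h2⟩
    obtain ⟨U, l, e1, e2, e3, e4⟩ := pp_struct hm hn P
    simp only [e1, e2, tb_fb, List.tail_cons, Finset.mem_filter]
    exact ⟨e3, by rw [← e4, h1, h2]⟩
  · rintro P Q - - h
    obtain ⟨U, l, e1, e2, e3, e4⟩ := pp_struct hm hn P
    obtain ⟨U', l', e1', e2', e3', e4'⟩ := pp_struct hm hn Q
    simp only [e1, e2, e1', e2', tb_fb, List.tail_cons, Prod.mk.injEq] at h
    obtain ⟨rfl, rfl⟩ := h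
    cases P; cases Q
    simp_all
  · rintro ⟨U, l⟩ h
    rw [Finset.mem_filter, mem_KS] at h
    obtain ⟨⟨⟨h1, h2⟩, ⟨h3, h4⟩, hV⟩, hAB⟩ := h
    simp only at h1 h2 h3 h4 hV hAB
    have ll := cnt_tf l
    have hc := (VV_of U l (m + n) (by omega)).1 hV
    obtain ⟨h5, h6⟩ := (pp_cond U (true :: l) m n hm (by omega) h2 (by simp; omega) (by simpa using h4)).2 hc
    let P : Polyomino m n := ⟨fb (true :: l), fb U, by rw [countE_fb]; simp; omega,
      by rw [countN_fb]; simpa using h4, by rw [countE_fb]; omega, by rw [countN_fb, h2], h5, h6⟩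
    refine ⟨P, ?_, by simp [P, tb_fb]⟩
    obtain ⟨U', l', e1, e2, e3, e4⟩ := pp_struct hm hn P
    have f1 := congrArg tb e1
    have f2 := congrArg tb e2
    simp only [tb_fb, P, List.cons.injEq, true_and] at f1 f2
    rw [← f1, ← f2, hAB] at e4
    simpa using e4


def pos (b : Bool) : ℕ → List Bool → List ℕ
  | _, [] => []
  | r, x :: w => if x = b then (r + 1) :: pos b (r + 1) w else pos b (r + 1) w

lemma pos_append (b : Bool) (v w : List Bool) : ∀ r, pos b r (v ++ w) =
    pos b r v ++ pos b (r + v.length) w := by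
  induction v with
  | nil => intro r; simp [pos]
  | cons x v ih =>
    intro r
    simp only [List.cons_append, pos, ih, List.length_cons, show r + 1 + v.length = r + (v.length + 1) by omega]
    split_ifs <;> simp

lemma pos_len (b : Bool) (w : List Bool) : ∀ r, (pos b r w).length = w.count b := by
  induction w with
  | nil => intro r; simp [pos]
  | cons x w ih =>
    intro r
    by_cases h : x = b
    · subst h; simp [pos, ih]
    · simp [pos, ih, h, List.count_cons_of_ne h]

lemma pos_bd (b : Bool) (w : List Bool) : ∀ r, ∀ p ∈ pos b r w, r < p ∧ p ≤ r + w.length := by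
  induction w with
  | nil => intro r p h; simp [pos] at h
  | cons x w ih =>
    intro r p hp
    have key : p = r + 1 ∨ p ∈ pos b (r + 1) w := by
      rw [pos] at hp
      split_ifs at hp
      · simpa using hp
      · exact Or.inr hp
    rcases key with rfl | h
    · simp
    · have := ih _ _ h
      simp only [List.length_cons]; omega

def yv : ℕ → List Bool → List ℕ → List ℕ
  | _, [], _ => []
  | p, true :: u, cs => p :: yv p u cs
  | p, false :: u, [] => yv p u []
  | _, false :: u, c :: cs => yv c u cs

lemma yv_append (v w : List Bool) : ∀ (p : ℕ) (c1 c2 : List ℕ), c1.length = v.count false →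
    ∃ y1, y1.length = v.count true ∧
      yv p (v ++ w) (c1 ++ c2) = y1 ++ yv (c1.getLastD p) w c2 := by
  induction v with
  | nil =>
    intro p c1 c2 h
    have : c1 = [] := by simpa using h
    subst this
    exact ⟨[], by simp, by simp⟩
  | cons x v ih =>
    intro p c1 c2 h
    cases x
    · cases c1 with
      | nil => simp at h
      | cons c c1 =>
        obtain ⟨y1, h1, h2⟩ := ih c c1 c2 (by simpa using h)
        refine ⟨y1, by simpa using h1, ?_⟩
        simp only [List.cons_append, yv, h2]
        simp only [List.getLastD_cons]
    · obtain ⟨y1, h1, h2⟩ := ih p c1 c2 (by simpa using h)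
      refine ⟨p :: y1, by simpa using h1, ?_⟩
      simp only [List.cons_append, yv, h2]

lemma greedy_skip (A B : List (ℕ × ℕ)) (r : ℕ) (h : ∀ p ∈ A, p.1 ≤ r) :
    greedyArcs (A ++ B) (some r) = greedyArcs B (some r) := by
  induction A with
  | nil => rfl
  | cons a A ih =>
    have h1 := h a (by simp)
    rw [List.cons_append, greedyArcs, if_neg (by omega), ih (fun p hp => h p (by simp [hp]))]

lemma greedy_nil (A : List (ℕ × ℕ)) (r : ℕ) (h : ∀ p ∈ A, p.1 ≤ r) :
    greedyArcs A (some r) = [] := by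
  have := greedy_skip A [] r h
  simpa [greedyArcs] using this

lemma greedy_none (A : List (ℕ × ℕ)) (h : ∀ p ∈ A, 0 < p.1) :
    greedyArcs A none = greedyArcs A (some 0) := by
  cases A with
  | nil => rfl
  | cons a A => rw [greedyArcs, greedyArcs, if_pos (h a (by simp))]

lemma greedy_main (n : ℕ) : ∀ (N a r p : ℕ) (pre : List ℕ) (u l : List Bool), l.length ≤ N →
    n = r + l.length → 1 ≤ a → pre.length + 1 = a → (∀ x ∈ pre, x ≤ r) →
    u.count true + 1 = a + l.count true → u.count false = l.count false →
    VV true a (u ++ [true]) l →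
    ((greedyArcs (List.zip (pre ++ pos true r l) (yv p u (pos false r l))) (some r)).map
      (fun p => n - p.2)).sum = (AB true a (u ++ [true]) l).2 := by
  have hz : ∀ (X Y : List ℕ) (r : ℕ), (∀ x ∈ X, x ≤ r) → ∀ p ∈ List.zip X Y, p.1 ≤ r := by
    intro X Y r h p hp
    exact h _ (List.of_mem_zip (a := p.1) (b := p.2) hp).1
  intro N
  induction N with
  | zero =>
    intro a r p pre u l hN hn ha hpre hle c1 c2 hV
    have : l = [] := List.length_eq_zero_iff.mp (by omega)
    subst this
    rw [greedy_nil _ _ (hz _ _ r (by simpa [pos] using hle)), AB_nil]; simp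
  | succ N ih =>
    intro a r p pre u l hN hn ha hpre hle c1 c2 hV
    by_cases hl : l = []
    · subst hl
      rw [greedy_nil _ _ (hz _ _ r (by simpa [pos] using hle)), AB_nil]; simp
    obtain ⟨a, rfl⟩ := Nat.exists_eq_add_of_le' ha
    obtain ⟨u1, u2, hu, hu1⟩ := exists_spl true (u ++ [true]) a (by simp; omega)
    have d1 := congrArg (List.count true) hu
    have d2 := congrArg (List.count false) hu
    simp at d1 d2
    rw [hu] at hV ⊢
    rw [VV_step true a u1 u2 l hl hu1 (by omega) (by simp; omega)] at hV
    rw [AB_step true a u1 u2 l hl hu1]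
    simp only [Bool.not_true, if_true, Nat.zero_add] at hV ⊢
    obtain ⟨hb, hV⟩ := hV
    rcases List.eq_nil_or_concat u2 with rfl | ⟨v, x, rfl⟩
    · have : pos true r l = [] := by
        rw [← List.length_eq_zero_iff, pos_len]
        simp at d1; omega
      rw [this, greedy_nil _ _ (hz _ _ r (by simpa using hle)), AB_nil]; simp
    have hx : u = u1 ++ true :: v ∧ x = true := by
      have : u ++ [true] = (u1 ++ true :: v) ++ [x] := by rw [hu]; simp
      have := List.append_inj' this rfl
      simp at this
      exact ⟨this.1, this.2⟩
    obtain ⟨rfl, rfl⟩ := hx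
    obtain ⟨b, hb'⟩ := Nat.exists_eq_add_of_le' hb
    simp only [List.concat_eq_append] at *
    simp at d1 d2 c1 c2
    obtain ⟨l1, l2, rfl, hl1⟩ := exists_spl false l b (by omega)
    simp at c1 c2 hN hn
    have hu2 : v ++ [true] ≠ [] := by simp
    rw [hb'] at hV ⊢
    rw [VV_step false b l1 l2 _ hu2 hl1 (by simp; omega) (by simp; omega)] at hV
    rw [AB_step false b l1 l2 _ hu2 hl1]
    simp only [Bool.not_false] at hV ⊢
    obtain ⟨ha', hV⟩ := hV
    have e1 : pos true r (l1 ++ false :: l2) = pos true r l1 ++ pos true (r + l1.length + 1) l2 := by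
      rw [pos_append, pos]; simp
    have e2 : pos false r (l1 ++ false :: l2) =
        (pos false r l1 ++ [r + l1.length + 1]) ++ pos false (r + l1.length + 1) l2 := by
      rw [pos_append, pos]; simp
    obtain ⟨y1, hy1, hy2⟩ := yv_append u1 (true :: v) p (pos false r l1 ++ [r + l1.length + 1])
      (pos false (r + l1.length + 1) l2) (by simp [pos_len]; omega)
    rw [e1, e2, hy2]
    simp only [List.getLastD_concat, yv]
    have hbd := pos_bd true l1 r
    have hlen := pos_len true l1 r
    cases hxs : pos true r l1 with
    | nil => rw [hxs] at hlen; simp at hlen; omega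
    | cons x xs =>
      rw [hxs] at hbd hlen
      rw [List.zip_append (by omega), greedy_skip _ _ _ (hz _ _ r hle)]
      rw [List.cons_append, List.zip_cons_cons, greedyArcs, if_pos (hbd x (by simp)).1]
      simp only [List.map_cons, List.sum_cons]
      rw [ih (l1.count true) (r + l1.length + 1) _ xs v l2 (by omega) (by omega) ha'
        (by simpa using hlen) (fun z hz => by have := (hbd z (by simp [hz])).2; omega)
        (by omega) (by omega) hV]
      simp; omega

def gp : List ℕ → List ℕ
  | [] => []
  | [_] => []
  | a :: b :: r => (b - a - 1) :: gp (b :: r)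

lemma gp_eq (L : List ℕ) : ∀ N, L.length = N + 1 →
    (List.range N).map (fun r => L.getD (r + 1) 0 - L.getD r 0 - 1) = gp L := by
  induction L with
  | nil => intro N h; simp at h
  | cons a L ih =>
    intro N h
    cases L with
    | nil => simp at h; subst h; simp [gp]
    | cons b L =>
      simp at h
      subst h
      rw [List.range_succ_eq_map, gp, ← ih L.length (by simp)]
      simp

lemma yv_gp (w : List Bool) : ∀ (c m r : ℕ) (cs : List ℕ), m ≤ r → w.count false ≤ cs.length →
    repeatEach (List.zip (c :: cs) (gp (m :: (pos false r w ++ [r + w.length + 1])))) =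
      List.replicate (r - m) c ++ yv c w cs := by
  induction w with
  | nil =>
    intro c m r cs hm hc
    simp only [pos, List.nil_append, gp, List.zip_cons_cons, List.zip_nil_right, repeatEach, yv]
    simp only [List.length_nil, List.append_nil]
    congr 1; omega
  | cons x w ih =>
    intro c m r cs hm hc
    cases x
    · cases cs with
      | nil => simp at hc
      | cons c' cs =>
        have := ih c' (r + 1) (r + 1) cs le_rfl (by simpa using hc)
        simp only [pos, if_true, List.cons_append, gp, List.zip_cons_cons, repeatEach, yv,
          List.length_cons]
        rw [show r + (w.length + 1) + 1 = r + 1 + w.length + 1 by omega]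
        rw [this, show r + 1 - m - 1 = r - m by omega]
        simp
    · have := ih c m (r + 1) cs (by omega) (by simpa using hc)
      simp only [pos, yv, List.length_cons]
      rw [show r + (w.length + 1) + 1 = r + 1 + w.length + 1 by omega]
      simp only [Bool.true_eq_false, if_false]
      rw [this, show r + 1 - m = (r - m) + 1 by omega, List.replicate_succ']
      simp


def wd (S : Finset ℕ) (n : ℕ) : List Bool := (List.range' 1 n).map (fun i => decide (i ∉ S))

def cf (S : Finset ℕ) (n : ℕ) : ℕ := (wd S n).count false

lemma wd_succ (S : Finset ℕ) (n : ℕ) : wd S (n + 1) = wd S n ++ [decide (n + 1 ∉ S)] := by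
  unfold wd
  rw [List.range'_1_concat]
  simp [Nat.add_comm]

lemma wd_len (S : Finset ℕ) (n : ℕ) : (wd S n).length = n := by simp [wd]

lemma wd_take (S : Finset ℕ) (n i : ℕ) (h : i ≤ n) : (wd S n).take i = wd S i := by
  induction n, h using Nat.le_induction with
  | base => rw [List.take_of_length_le (by rw [wd_len])]
  | succ n hn ih => rw [wd_succ, List.take_append_of_le_length (by rw [wd_len]; exact hn), ih]

lemma cf_zero (S : Finset ℕ) : cf S 0 = 0 := rfl

lemma cf_succ (S : Finset ℕ) (n : ℕ) : cf S (n + 1) = cf S n + if n + 1 ∈ S then 1 else 0 := by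
  unfold cf
  rw [wd_succ, List.count_append]
  by_cases h : n + 1 ∈ S <;> simp [h]

lemma cf_true (S : Finset ℕ) (n : ℕ) : (wd S n).count true + cf S n = n := by
  have := cnt_tf (wd S n)
  rw [wd_len] at this
  exact this

lemma cf_card (S : Finset ℕ) (n : ℕ) : ((Finset.Icc 1 n).filter (· ∈ S)).card = cf S n := by
  induction n with
  | zero => simp [cf_zero]
  | succ n ih =>
    rw [cf_succ, ← Finset.insert_Icc_right_eq_Icc_add_one (by omega), Finset.filter_insert]
    split_ifs with h
    · rw [Finset.card_insert_of_notMem (by simp), ih]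
    · rw [ih]; rfl

lemma cf_full (S : Finset ℕ) (n : ℕ) (h : S ⊆ Finset.Icc 1 n) : cf S n = S.card := by
  rw [← cf_card]
  congr 1
  ext x; simp only [Finset.mem_filter]
  exact ⟨fun h => h.2, fun hx => ⟨h hx, hx⟩⟩

lemma pos_map (b : Bool) (f : ℕ → Bool) (n : ℕ) : ∀ r,
    pos b r ((List.range' (r + 1) n).map f) = (List.range' (r + 1) n).filter (fun i => f i = b) := by
  induction n with
  | zero => intro r; simp [pos]
  | succ n ih =>
    intro r
    rw [List.range'_succ, List.map_cons, pos, ih]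
    by_cases h : f (r + 1) = b
    · simp [h]
    · simp [h]

lemma sort_filter (n : ℕ) (S : Finset ℕ) (p : ℕ → Bool)
    (h : ∀ i, i ∈ S ↔ 1 ≤ i ∧ i ≤ n ∧ p i = true) :
    S.sort (· ≤ ·) = (List.range' 1 n).filter p := by
  have h1 : ((List.range' 1 n).filter p).Pairwise (· < ·) :=
    (List.pairwise_lt_range' 1).sublist List.filter_sublist
  have h2 : S = ((List.range' 1 n).filter p).toFinset := by
    ext i
    simp only [h, List.mem_toFinset, List.mem_filter, List.mem_range'_1]
    constructor
    · rintro ⟨a, b, c⟩; exact ⟨⟨a, by omega⟩, c⟩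
    · rintro ⟨⟨a, b⟩, c⟩; exact ⟨a, by omega, c⟩
  rw [h2]
  exact (List.toFinset_sort (· ≤ ·) (h1.imp (fun h => h.ne))).mpr (h1.imp (fun h => h.le))

lemma sort_wd (n : ℕ) (S : Finset ℕ) (h : S ⊆ Finset.Icc 1 n) :
    S.sort (· ≤ ·) = pos false 0 (wd S n) := by
  have := pos_map false (fun i => decide (i ∉ S)) n 0
  unfold wd
  rw [Nat.zero_add] at this
  rw [this]
  apply sort_filter
  intro i
  simp only [decide_eq_true_eq, decide_eq_false_iff_not, not_not]
  constructor
  · intro hi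
    have := h hi
    rw [Finset.mem_Icc] at this
    exact ⟨this.1, this.2, hi⟩
  · exact fun h => h.2.2

lemma sort_wd' (n : ℕ) (S : Finset ℕ) :
    ((Finset.Icc 1 n).filter (fun i => i ∉ S)).sort (· ≤ ·) = pos true 0 (wd S n) := by
  have := pos_map true (fun i => decide (i ∉ S)) n 0
  unfold wd
  rw [Nat.zero_add] at this
  rw [this]
  apply sort_filter
  intro i
  simp [and_assoc]

lemma wd_inj (n : ℕ) (S T : Finset ℕ) (hS : S ⊆ Finset.Icc 1 n) (hT : T ⊆ Finset.Icc 1 n)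
    (h : wd S n = wd T n) : S = T := by
  have : S.sort (· ≤ ·) = T.sort (· ≤ ·) := by rw [sort_wd n S hS, sort_wd n T hT, h]
  have := congrArg List.toFinset this
  simpa using this

lemma wd_congr (n : ℕ) (S T : Finset ℕ) (h : ∀ i, 1 ≤ i → i ≤ n → (i ∈ S ↔ i ∈ T)) :
    wd S n = wd T n := by
  unfold wd
  apply List.map_congr_left
  intro i hi
  rw [List.mem_range'_1] at hi
  have := h i hi.1 (by omega)
  simp [this]

lemma wd_surj (w : List Bool) : ∃ S, S ⊆ Finset.Icc 1 w.length ∧ wd S w.length = w := by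
  induction w using List.reverseRecOn with
  | nil => exact ⟨∅, by simp, by simp [wd]⟩
  | append_singleton w x ih =>
    obtain ⟨S, h1, h2⟩ := ih
    rw [List.length_append, List.length_singleton]
    have h3 : w.length + 1 ∉ S := fun h => by
      have := h1 h
      simp at this
    have h4 : S ⊆ Finset.Icc 1 (w.length + 1) := h1.trans (Finset.Icc_subset_Icc_right (by omega))
    cases x
    · refine ⟨insert (w.length + 1) S, ?_, ?_⟩
      · intro i hi
        rw [Finset.mem_insert] at hi
        rcases hi with rfl | hi
        · simp
        · exact h4 hi
      · rw [wd_succ]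
        congr 1
        · conv_rhs => rw [← h2]
          apply wd_congr
          intro i _ hi
          simp; omega
        · simp
    · refine ⟨S, h4, ?_⟩
      rw [wd_succ, h2]
      simp [h3]

lemma cv_wd (S : Finset ℕ) (n : ℕ) : cv true (wd S n) + (∑ j ∈ Finset.range (cf S n), j) +
    (∑ i ∈ Finset.range n, if i + 1 ∈ S then i + 1 else 0) = cf S n * n := by
  induction n with
  | zero => simp [cf_zero, wd, cv]
  | succ n ih =>
    rw [wd_succ, cv_append, cf_succ, Finset.sum_range_succ _ n]
    have : (wd S n).count (!true) = cf S n := rfl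
    rw [this]
    by_cases h : n + 1 ∈ S
    · simp only [h, if_true, Finset.sum_range_succ]
      simp [cv]
      nlinarith
    · simp only [h, if_false]
      simp [cv]
      nlinarith

lemma sum_full (S : Finset ℕ) (n : ℕ) (h : S ⊆ Finset.Icc 1 n) :
    (∑ i ∈ Finset.range n, if i + 1 ∈ S then i + 1 else 0) = ∑ x ∈ S, x := by
  rw [← Finset.sum_filter]
  refine Finset.sum_nbij (fun i => i + 1) ?_ ?_ ?_ ?_
  · intro i hi; exact (Finset.mem_filter.mp hi).2
  · intro i _ j _ hij; simpa using hij
  · intro x hx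
    have := Finset.mem_Icc.mp (h hx)
    refine ⟨x - 1, ?_, by simp only; omega⟩
    simp only [Finset.coe_filter, Finset.mem_range, Set.mem_ofPred_eq]
    refine ⟨by omega, ?_⟩
    rw [show x - 1 + 1 = x by omega]; exact hx
  · intros; rfl

section stats

lemma fmin_mem {β : Finset ℕ} (h : β.Nonempty) : fmin β ∈ β := by
  rw [fmin, dif_pos h]; exact β.min'_mem h

lemma fmin_le {β : Finset ℕ} {x : ℕ} (h : x ∈ β) : fmin β ≤ x := by
  rw [fmin, dif_pos ⟨x, h⟩]; exact β.min'_le x h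

lemma le_fmax {β : Finset ℕ} {x : ℕ} (h : x ∈ β) : x ≤ fmax β :=
  Finset.le_sup (f := id) h

lemma fmax_mem {β : Finset ℕ} (h : β.Nonempty) : fmax β ∈ β := by
  obtain ⟨x, hx, he⟩ := Finset.exists_mem_eq_sup β h id
  rw [fmax, he]; exact hx

lemma fmin_eq {β : Finset ℕ} {x : ℕ} (h : x ∈ β) (h2 : ∀ y ∈ β, x ≤ y) : fmin β = x :=
  le_antisymm (fmin_le h) (h2 _ (fmin_mem ⟨x, h⟩))

lemma fmax_eq {β : Finset ℕ} {x : ℕ} (h : x ∈ β) (h2 : ∀ y ∈ β, y ≤ x) : fmax β = x :=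
  le_antisymm (h2 _ (fmax_mem ⟨x, h⟩)) (le_fmax h)

variable {n : ℕ} (P : SetPartition n)

lemma blk_ne {β : Finset ℕ} (h : β ∈ P.blocks) : β.Nonempty := by
  rw [Finset.nonempty_iff_ne_empty]
  rintro rfl
  exact P.not_empty_mem h

lemma blk_eq {β γ : Finset ℕ} (h : β ∈ P.blocks) (h' : γ ∈ P.blocks) {x : ℕ} (hx : x ∈ β)
    (hx' : x ∈ γ) : β = γ := by
  by_contra hne
  exact Finset.disjoint_left.mp (P.disjoint β h γ h' hne) hx hx'

lemma blk_Icc {β : Finset ℕ} (h : β ∈ P.blocks) {x : ℕ} (hx : x ∈ β) : 1 ≤ x ∧ x ≤ n := by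
  rw [← Finset.mem_Icc, P.cover]
  exact ⟨β, h, hx⟩

lemma inj_min : Set.InjOn fmin (P.blocks : Set (Finset ℕ)) := by
  intro β h γ h' he
  have a := fmin_mem (blk_ne P h)
  have b := fmin_mem (blk_ne P h')
  rw [← he] at b
  exact blk_eq P h h' a b

lemma inj_max : Set.InjOn fmax (P.blocks : Set (Finset ℕ)) := by
  intro β h γ h' he
  have a := fmax_mem (blk_ne P h)
  have b := fmax_mem (blk_ne P h')
  rw [← he] at b
  exact blk_eq P h h' a b

lemma min_sub : P.blocks.image fmin ⊆ Finset.Icc 1 n := by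
  intro x hx
  obtain ⟨β, h, rfl⟩ := Finset.mem_image.mp hx
  exact Finset.mem_Icc.mpr (blk_Icc P h (fmin_mem (blk_ne P h)))

lemma max_sub : P.blocks.image fmax ⊆ Finset.Icc 1 n := by
  intro x hx
  obtain ⟨β, h, rfl⟩ := Finset.mem_image.mp hx
  exact Finset.mem_Icc.mpr (blk_Icc P h (fmax_mem (blk_ne P h)))

lemma cf_img (g : Finset ℕ → ℕ) (hg : Set.InjOn g (P.blocks : Set (Finset ℕ)))
    (hs : P.blocks.image g ⊆ Finset.Icc 1 n) (i : ℕ) :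
    cf (P.blocks.image g) i = (P.blocks.filter (fun β => g β ≤ i)).card := by
  rw [← cf_card, ← Finset.card_image_of_injOn
    (hg.mono (Finset.coe_subset.mpr (Finset.filter_subset (fun β => g β ≤ i) P.blocks)))]
  congr 1
  ext x
  simp only [Finset.mem_filter, Finset.mem_image, Finset.mem_Icc]
  constructor
  · rintro ⟨⟨h1, h2⟩, β, h3, rfl⟩
    exact ⟨β, ⟨h3, h2⟩, rfl⟩
  · rintro ⟨β, ⟨h3, h2⟩, rfl⟩
    have := Finset.mem_Icc.mp (hs (Finset.mem_image_of_mem g h3))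
    exact ⟨⟨this.1, h2⟩, β, h3, rfl⟩

lemma cf_cond (i : ℕ) (hi : i < n) :
    cf (P.blocks.image fmax) i < cf (P.blocks.image fmin) (i + 1) := by
  rw [cf_img P fmax (inj_max P) (max_sub P), cf_img P fmin (inj_min P) (min_sub P)]
  apply Finset.card_lt_card
  obtain ⟨β, hβ, hx⟩ := (P.cover (i + 1)).1 (Finset.mem_Icc.mpr ⟨by omega, by omega⟩)
  rw [Finset.ssubset_iff_of_subset]
  · refine ⟨β, Finset.mem_filter.mpr ⟨hβ, fmin_le hx⟩, ?_⟩
    rw [Finset.mem_filter]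
    rintro ⟨_, h⟩
    have := le_fmax hx
    omega
  · intro γ h
    rw [Finset.mem_filter] at h ⊢
    refine ⟨h.1, ?_⟩
    have := le_fmax (fmin_mem (blk_ne P h.1))
    omega

lemma sum_card : ∑ β ∈ P.blocks, β.card = n := by
  rw [← Finset.card_biUnion (fun β h γ h' hne => P.disjoint β h γ h' hne)]
  have : P.blocks.biUnion (fun β => β) = Finset.Icc 1 n := by
    ext i
    rw [P.cover, Finset.mem_biUnion]
  rw [this]; simp

lemma skip_id : skip P.blocks + n + ∑ x ∈ P.blocks.image fmin, x =
    (∑ x ∈ P.blocks.image fmax, x) + P.blocks.card := by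
  rw [Finset.sum_image (inj_min P), Finset.sum_image (inj_max P), skip, Finset.card_eq_sum_ones]
  conv_lhs => enter [1, 2]; rw [← sum_card P]
  rw [← Finset.sum_add_distrib, ← Finset.sum_add_distrib, ← Finset.sum_add_distrib]
  refine Finset.sum_congr rfl fun β h => ?_
  have h1 := fmin_le (fmax_mem (blk_ne P h))
  have h2 : β.card ≤ fmax β + 1 - fmin β := by
    rw [← Nat.card_Icc]
    apply Finset.card_le_card
    intro x hx
    exact Finset.mem_Icc.mpr ⟨fmin_le hx, le_fmax hx⟩
  omega

lemma VV_wd (M C : Finset ℕ) (n : ℕ) : VV true 1 (wd M n ++ [true]) (wd C n) ↔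
    ∀ i < n, cf C i < cf M (i + 1) := by
  unfold VV
  rw [wd_len]
  refine forall_congr' fun i => forall_congr' fun hi => ?_
  rw [List.take_append_of_le_length (by rw [wd_len]; omega), wd_take _ _ _ (by omega),
    wd_take _ _ _ (by omega), Nat.add_comm 1 i]
  have h1 := cf_true M (i + 1)
  have h2 := cf_true C i
  omega

lemma ys_eq (hn : 1 ≤ n) : ysList n P.blocks =
    yv 0 (wd (P.blocks.image fmin) n) (pos false 0 (wd (P.blocks.image fmax) n)) := by
  have hM := min_sub P
  have hC := max_sub P
  have h1 : 1 ∈ P.blocks.image fmin := by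
    have := cf_cond P 0 (by omega)
    rw [cf_succ] at this
    by_contra h
    simp [h, cf_zero] at this
  have cM := cf_full _ n hM
  have cC := cf_full _ n hC
  rw [Finset.card_image_of_injOn (inj_min P)] at cM
  rw [Finset.card_image_of_injOn (inj_max P)] at cC
  unfold ysList nuList
  simp only
  rw [gp_eq _ _ (by simp), sort_wd n _ hM, sort_wd n _ hC]
  generalize P.blocks.image fmin = M at *
  generalize P.blocks.image fmax = C at *
  have hlen := wd_len M n
  have hcs := pos_len false (wd C n) 0
  change _ = cf C n at hcs
  unfold cf at cM
  cases hw : wd M n with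
  | nil => rw [hw] at hlen; simp at hlen; omega
  | cons x w =>
    have hx : x = false := by
      have := wd_take M n 1 hn
      rw [hw] at this
      simp [wd, h1] at this
      exact this
    subst hx
    rw [hw] at cM hlen
    simp at cM hlen
    cases hcs' : pos false 0 (wd C n) with
    | nil => rw [hcs'] at hcs; simp at hcs; omega
    | cons c cs =>
      rw [hcs'] at hcs
      simp at hcs
      have := yv_gp w c 1 1 cs le_rfl (by omega)
      simp only [pos, if_true, yv, Nat.zero_add]
      rw [show 1 + w.length + 1 = n + 1 by omega] at this
      rw [List.cons_append, this]
      simp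

lemma nc_stats (hn : 1 ≤ n) : (skip P.blocks, mingarc n P.blocks) =
    AB true 1 (wd (P.blocks.image fmin) n ++ [true]) (wd (P.blocks.image fmax) n) := by
  have hM := min_sub P
  have hC := max_sub P
  have cM := cf_full _ n hM
  have cC := cf_full _ n hC
  rw [Finset.card_image_of_injOn (inj_min P)] at cM
  rw [Finset.card_image_of_injOn (inj_max P)] at cC
  have sk := skip_id P
  have hV := (VV_wd _ _ n).2 (cf_cond P)
  have tM := cf_true (P.blocks.image fmin) n
  have tC := cf_true (P.blocks.image fmax) n
  ext
  · have hA := AB_area _ true 1 (wd (P.blocks.image fmin) n ++ [true]) (wd (P.blocks.image fmax) n)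
      le_rfl le_rfl (by simp; omega) (by
        simp only [Bool.not_true, List.count_append]
        change cf _ _ + _ = cf _ _
        simp; omega) hV
    have v1 := cv_wd (P.blocks.image fmin) n
    have v2 := cv_wd (P.blocks.image fmax) n
    rw [sum_full _ n hM] at v1
    rw [sum_full _ n hC] at v2
    rw [cv_append, wd_len] at hA
    have e : (wd (P.blocks.image fmin) n).count (!true) = cf (P.blocks.image fmin) n := rfl
    rw [e] at hA
    simp only [cv, if_true, List.count_singleton] at hA
    rw [cM] at hA v1
    rw [cC] at v2
    simp at hA ⊢
    omega
  · simp only [mingarc]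
    rw [greedy_none]
    · unfold xsList
      rw [ys_eq P hn, sort_wd']
      exact greedy_main n n 1 0 0 [] _ _ (by rw [wd_len]) (by rw [wd_len]; omega) le_rfl rfl
        (by simp) (by omega) (by change cf _ _ = cf _ _; omega) hV
    · intro p hp
      have := (List.of_mem_zip (a := p.1) (b := p.2) hp).1
      unfold xsList at this
      simp at this
      omega

lemma nc_mem (k : ℕ) (hk : 1 ≤ k) (hkn : k ≤ n) (hc : P.blocks.card = n - k + 1) :
    (wd (P.blocks.image fmin) n ++ [true], wd (P.blocks.image fmax) n) ∈ KS (k - 1) (n - k + 1) := by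
  have hM := min_sub P
  have hC := max_sub P
  have cM := cf_full _ n hM
  have cC := cf_full _ n hC
  rw [Finset.card_image_of_injOn (inj_min P)] at cM
  rw [Finset.card_image_of_injOn (inj_max P)] at cC
  have hV := (VV_wd _ _ n).2 (cf_cond P)
  have tM := cf_true (P.blocks.image fmin) n
  have tC := cf_true (P.blocks.image fmax) n
  rw [mem_KS]
  refine ⟨⟨?_, ?_⟩, ⟨?_, ?_⟩, hV⟩
  · simp; omega
  · simp only [List.count_append]
    change cf _ _ + _ = _
    simp; omega
  · simp only; omega
  · change cf _ _ = _
    omega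

end stats

def Hh (M C : Finset ℕ) (i : ℕ) : ℤ := (cf M i : ℤ) - cf C (i - 1)

def rho (M C : Finset ℕ) (i : ℕ) : ℕ :=
  fmax ((Finset.Icc 1 i).filter (fun m => m ∈ M ∧ Hh M C m ≤ Hh M C i))

lemma rho_eq {M C : Finset ℕ} {i m : ℕ} (h1 : 1 ≤ m) (h2 : m ≤ i) (h3 : m ∈ M)
    (h4 : Hh M C m ≤ Hh M C i)
    (h5 : ∀ m' ∈ M, m < m' → m' ≤ i → Hh M C i < Hh M C m') : rho M C i = m := by
  apply fmax_eq
  · simp; exact ⟨⟨h1, h2⟩, h3, h4⟩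
  · intro y hy
    simp at hy
    by_contra hlt
    have := h5 y hy.2.1 (by omega) hy.1.2
    omega

section inj
variable {n : ℕ} (P : SetPartition n)

lemma Hh_act (i : ℕ) (hi : 1 ≤ i) : Hh (P.blocks.image fmin) (P.blocks.image fmax) i =
    ((P.blocks.filter (fun β => fmin β ≤ i ∧ i ≤ fmax β)).card : ℤ) := by
  unfold Hh
  rw [cf_img P fmax (inj_max P) (max_sub P), cf_img P fmin (inj_min P) (min_sub P)]
  have : P.blocks.filter (fun β => fmin β ≤ i) =
      P.blocks.filter (fun β => fmin β ≤ i ∧ i ≤ fmax β) ∪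
        P.blocks.filter (fun β => fmax β ≤ i - 1) := by
    ext β
    simp only [Finset.mem_filter, Finset.mem_union]
    constructor
    · rintro ⟨h1, h2⟩
      by_cases h : i ≤ fmax β
      · left; exact ⟨h1, h2, h⟩
      · right; exact ⟨h1, by omega⟩
    · rintro (⟨h1, h2, h3⟩ | ⟨h1, h2⟩)
      · exact ⟨h1, h2⟩
      · have := le_fmax (fmin_mem (blk_ne P h1))
        exact ⟨h1, by omega⟩
  rw [this, Finset.card_union_of_disjoint]
  · push_cast; ring
  · rw [Finset.disjoint_left]
    intro β h1 h2
    simp only [Finset.mem_filter] at h1 h2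
    omega

lemma rho_blk (hnc : IsNoncrossing P.blocks) {β : Finset ℕ} (hβ : β ∈ P.blocks) {i : ℕ} (hi : i ∈ β) :
    rho (P.blocks.image fmin) (P.blocks.image fmax) i = fmin β := by
  have hm := fmin_mem (blk_ne P hβ)
  have hI := blk_Icc P hβ hm
  have hle := fmin_le hi
  have lt_or : ∀ {γ : Finset ℕ} {x : ℕ}, γ ∈ P.blocks → γ ≠ β → x ∈ β → fmin γ ≠ x ∧ fmax γ ≠ x := by
    intro γ x hγ hne hx
    constructor
    · intro he
      exact hne (blk_eq P hγ hβ (fmin_mem (blk_ne P hγ)) (he ▸ hx))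
    · intro he
      exact hne (blk_eq P hγ hβ (fmax_mem (blk_ne P hγ)) (he ▸ hx))
  apply rho_eq hI.1 hle (Finset.mem_image_of_mem _ hβ)
  · rw [Hh_act P _ hI.1, Hh_act P _ (by omega)]
    norm_cast
    apply Finset.card_le_card
    intro γ h
    rw [Finset.mem_filter] at h ⊢
    refine ⟨h.1, by omega, ?_⟩
    by_cases hγ : γ = β
    · subst hγ; exact le_fmax hi
    · have k1 := lt_or h.1 hγ hm
      by_contra hcon
      exact hγ (hnc (fmin γ) (fmin β) (fmax γ) i (by omega) (by omega) (by omega) γ h.1 β hβ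
        (fmin_mem (blk_ne P h.1)) (fmax_mem (blk_ne P h.1)) hm hi)
  · intro m' hm' h1 h2
    obtain ⟨γ, hγ, rfl⟩ := Finset.mem_image.mp hm'
    rw [Hh_act P _ (by omega), Hh_act P _ (by omega)]
    norm_cast
    apply Finset.card_lt_card
    have key : ∀ δ ∈ P.blocks, fmin δ ≤ i → i ≤ fmax δ → fmin δ ≤ fmin β := by
      intro δ hδ d1 d2
      by_contra hcon
      have hne : δ ≠ β := by rintro rfl; omega
      have k1 := lt_or hδ hne hi
      exact hne (hnc (fmin β) (fmin δ) i (fmax δ) (by omega) (by omega) (by omega) β hβ δ hδ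
        hm hi (fmin_mem (blk_ne P hδ)) (fmax_mem (blk_ne P hδ))).symm
    rw [Finset.ssubset_iff_of_subset]
    · refine ⟨γ, Finset.mem_filter.mpr ⟨hγ, le_rfl, le_fmax (fmin_mem (blk_ne P hγ))⟩, ?_⟩
      intro h
      rw [Finset.mem_filter] at h
      have := key γ hγ h.2.1 h.2.2
      omega
    · intro δ hδ
      rw [Finset.mem_filter] at hδ ⊢
      have := key δ hδ.1 hδ.2.1 hδ.2.2
      exact ⟨hδ.1, by omega, by omega⟩

lemma blocks_eq (hnc : IsNoncrossing P.blocks) : P.blocks =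
    (Finset.Icc 1 n).image (fun i => (Finset.Icc 1 n).filter (fun j =>
      rho (P.blocks.image fmin) (P.blocks.image fmax) j =
      rho (P.blocks.image fmin) (P.blocks.image fmax) i)) := by
  have key : ∀ β ∈ P.blocks, ∀ i ∈ β, (Finset.Icc 1 n).filter (fun j =>
      rho (P.blocks.image fmin) (P.blocks.image fmax) j =
      rho (P.blocks.image fmin) (P.blocks.image fmax) i) = β := by
    intro β hβ i hi
    ext j
    rw [Finset.mem_filter, rho_blk P hnc hβ hi]
    constructor
    · rintro ⟨h1, h2⟩
      obtain ⟨γ, hγ, hj⟩ := (P.cover j).1 h1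
      rw [rho_blk P hnc hγ hj] at h2
      rw [← inj_min P hγ hβ h2]; exact hj
    · intro hj
      exact ⟨(P.cover j).2 ⟨β, hβ, hj⟩, rho_blk P hnc hβ hj⟩
  ext β
  rw [Finset.mem_image]
  constructor
  · intro hβ
    obtain ⟨i, hi⟩ := blk_ne P hβ
    exact ⟨i, (P.cover i).2 ⟨β, hβ, hi⟩, key β hβ i hi⟩
  · rintro ⟨i, hi, rfl⟩
    obtain ⟨γ, hγ, hi'⟩ := (P.cover i).1 hi
    rw [key γ hγ i hi']; exact hγ

end inj

lemma nc_inj {n : ℕ} (P Q : SetPartition n) (hP : IsNoncrossing P.blocks)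
    (hQ : IsNoncrossing Q.blocks) (h1 : P.blocks.image fmin = Q.blocks.image fmin)
    (h2 : P.blocks.image fmax = Q.blocks.image fmax) : P = Q := by
  have : P.blocks = Q.blocks := by rw [blocks_eq P hP, blocks_eq Q hQ, h1, h2]
  cases P; cases Q; simp_all

section surj
variable {n : ℕ} {M C : Finset ℕ}

lemma Hh_succ (i : ℕ) (hi : 1 ≤ i) : Hh M C (i + 1) =
    Hh M C i + (if i + 1 ∈ M then 1 else 0) - (if i ∈ C then 1 else 0) := by
  obtain ⟨j, rfl⟩ := Nat.exists_eq_add_of_le' hi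
  unfold Hh
  simp only [Nat.add_sub_cancel]
  rw [cf_succ M, cf_succ C]
  push_cast; ring

lemma Hh_rise (j : ℕ) (hj : 1 ≤ j) (v : ℤ) : ∀ d, Hh M C j < v → v ≤ Hh M C (j + d) →
    ∃ m' ∈ M, j < m' ∧ m' ≤ j + d ∧ Hh M C m' ≤ v := by
  intro d
  induction d with
  | zero => intro h1 h2; simp at h2; omega
  | succ d ih =>
    intro h1 h2
    by_cases h : v ≤ Hh M C (j + d)
    · obtain ⟨m', a, b, c, e⟩ := ih h1 h
      exact ⟨m', a, b, by omega, e⟩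
    · have := Hh_succ (M := M) (C := C) (j + d) (by omega)
      rw [← Nat.add_assoc] at h2
      refine ⟨j + d + 1, ?_, by omega, by omega, ?_⟩
      · by_contra hM
        rw [if_neg hM] at this
        split_ifs at this <;> omega
      · split_ifs at this <;> omega

lemma rho_spec (h1M : 1 ∈ M) (i : ℕ) (hi : 1 ≤ i) (hpos : 1 ≤ Hh M C i) :
    rho M C i ∈ M ∧ 1 ≤ rho M C i ∧ rho M C i ≤ i ∧ Hh M C (rho M C i) = Hh M C i ∧
    (∀ j, rho M C i ≤ j → j ≤ i → Hh M C i ≤ Hh M C j) ∧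
    (∀ m' ∈ M, 1 ≤ m' → m' ≤ i → Hh M C m' ≤ Hh M C i → m' ≤ rho M C i) := by
  have hH1 : Hh M C 1 = 1 := by
    unfold Hh
    rw [cf_succ]; simp [cf_zero, h1M]
  have hne : ((Finset.Icc 1 i).filter (fun m => m ∈ M ∧ Hh M C m ≤ Hh M C i)).Nonempty :=
    ⟨1, by simp [h1M, hi, hH1, hpos]⟩
  have hmem := fmax_mem hne
  have hmax : ∀ m' ∈ M, 1 ≤ m' → m' ≤ i → Hh M C m' ≤ Hh M C i → m' ≤ rho M C i := by
    intro m' a b c d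
    apply le_fmax
    simp; exact ⟨⟨b, c⟩, a, d⟩
  change rho M C i ∈ _ at hmem
  simp only [Finset.mem_filter, Finset.mem_Icc] at hmem
  obtain ⟨⟨a, b⟩, c, d⟩ := hmem
  have hj : ∀ j, rho M C i ≤ j → j ≤ i → Hh M C i ≤ Hh M C j := by
    intro j h1 h2
    by_contra hlt
    obtain ⟨e, rfl⟩ := Nat.exists_eq_add_of_le h2
    obtain ⟨m', q1, q2, q3, q4⟩ := Hh_rise (M := M) (C := C) j (by omega) _ e (not_le.mp hlt) le_rfl
    have := hmax m' q1 (by omega) q3 q4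
    omega
  exact ⟨c, a, b, le_antisymm d (hj _ le_rfl b), hj, hmax⟩

lemma nc_surj (hM : M ⊆ Finset.Icc 1 n) (hC : C ⊆ Finset.Icc 1 n) (hcard : M.card = C.card)
    (hn : 1 ≤ n) (hV : ∀ i < n, cf C i < cf M (i + 1)) :
    ∃ P : SetPartition n, IsNoncrossing P.blocks ∧ P.blocks.image fmin = M ∧
      P.blocks.image fmax = C := by
  have h1M : 1 ∈ M := by
    have := hV 0 (by omega)
    rw [cf_succ] at this
    by_contra h
    simp [h, cf_zero] at this
  have hpos : ∀ i, 1 ≤ i → i ≤ n → 1 ≤ Hh M C i := by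
    intro i h1 h2
    have := hV (i - 1) (by omega)
    rw [show i - 1 + 1 = i by omega] at this
    unfold Hh; omega
  have spec := fun i h1 h2 => rho_spec h1M i h1 (hpos i h1 h2)
  have rhoM : ∀ m ∈ M, rho M C m = m := by
    intro m hm
    have hI := Finset.mem_Icc.mp (hM hm)
    obtain ⟨_, _, a, _, _, b⟩ := spec m hI.1 hI.2
    exact le_antisymm a (b m hm hI.1 le_rfl le_rfl)
  let fib : ℕ → Finset ℕ := fun m => (Finset.Icc 1 n).filter (fun j => rho M C j = m)
  have mem_fib : ∀ m j, j ∈ fib m ↔ (1 ≤ j ∧ j ≤ n) ∧ rho M C j = m := by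
    intro m j; simp [fib]
  have self : ∀ m ∈ M, m ∈ fib m := by
    intro m hm
    rw [mem_fib]
    exact ⟨Finset.mem_Icc.mp (hM hm), rhoM m hm⟩
  have fibmin : ∀ m ∈ M, fmin (fib m) = m := by
    intro m hm
    apply fmin_eq (self m hm)
    intro y hy
    rw [mem_fib] at hy
    have := (spec y hy.1.1 hy.1.2).2.2.1
    omega
  let P : SetPartition n :=
    { blocks := M.image fib
      not_empty_mem := by
        intro h
        obtain ⟨m, hm, he⟩ := Finset.mem_image.mp h
        have := self m hm
        rw [he] at this
        simp at this
      cover := by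
        intro i
        constructor
        · intro hi
          have hi' := Finset.mem_Icc.mp hi
          exact ⟨fib (rho M C i), Finset.mem_image_of_mem _ (spec i hi'.1 hi'.2).1,
            (mem_fib _ _).2 ⟨hi', rfl⟩⟩
        · rintro ⟨β, hβ, hi⟩
          obtain ⟨m, hm, rfl⟩ := Finset.mem_image.mp hβ
          exact Finset.mem_Icc.mpr ((mem_fib _ _).1 hi).1
      disjoint := by
        intro β hβ γ hγ hne
        obtain ⟨m, hm, rfl⟩ := Finset.mem_image.mp hβ
        obtain ⟨m', hm', rfl⟩ := Finset.mem_image.mp hγ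
        rw [Finset.disjoint_left]
        intro x h1 h2
        rw [mem_fib] at h1 h2
        apply hne
        rw [← h1.2, h2.2] }
  have hPmin : P.blocks.image fmin = M := by
    change (M.image fib).image fmin = M
    rw [Finset.image_image]
    ext x
    rw [Finset.mem_image]
    constructor
    · rintro ⟨m, hm, rfl⟩
      simp only [Function.comp, fibmin m hm]; exact hm
    · intro hx
      exact ⟨x, hx, fibmin x hx⟩
  refine ⟨P, ?_, hPmin, ?_⟩
  · intro a b c d hab hbc hcd β hβ γ hγ ha hc hb hd
    obtain ⟨m, hm, rfl⟩ := Finset.mem_image.mp hβ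
    obtain ⟨m', hm', rfl⟩ := Finset.mem_image.mp hγ
    rw [mem_fib] at ha hb hc hd
    obtain ⟨a1, a2, a3, a4, a5, a6⟩ := spec a ha.1.1 ha.1.2
    obtain ⟨b1, b2, b3, b4, b5, b6⟩ := spec b hb.1.1 hb.1.2
    obtain ⟨c1, c2, c3, c4, c5, c6⟩ := spec c hc.1.1 hc.1.2
    obtain ⟨d1, d2, d3, d4, d5, d6⟩ := spec d hd.1.1 hd.1.2
    rw [ha.2] at *
    rw [hb.2] at *
    rw [hc.2] at *
    rw [hd.2] at *
    have e1 := c5 b (by omega) (by omega)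
    have e2 := d5 c (by omega) (by omega)
    have e3 := c6 m' hm' b2 (by omega) (by omega)
    have e4 := b6 m hm a2 (by omega) (by omega)
    rw [le_antisymm e3 e4]
  · symm
    apply Finset.eq_of_subset_of_card_le
    · intro c hc
      have hI := Finset.mem_Icc.mp (hC hc)
      obtain ⟨c1, c2, c3, c4, c5, c6⟩ := spec c hI.1 hI.2
      rw [Finset.mem_image]
      refine ⟨fib (rho M C c), Finset.mem_image_of_mem _ c1, ?_⟩
      apply fmax_eq
      · rw [mem_fib]; exact ⟨hI, rfl⟩
      · intro j hj
        rw [mem_fib] at hj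
        by_contra hlt
        obtain ⟨j1, j2, j3, j4, j5, j6⟩ := spec j hj.1.1 hj.1.2
        rw [hj.2] at j4 j5 j6
        have e := j5 (c + 1) (by omega) (by omega)
        have hs := Hh_succ (M := M) (C := C) c hI.1
        rw [if_pos hc] at hs
        by_cases hcM : c + 1 ∈ M
        · rw [if_pos hcM] at hs
          have := j6 (c + 1) hcM (by omega) (by omega) (by omega)
          omega
        · rw [if_neg hcM] at hs
          omega
    · rw [Finset.card_image_of_injOn (inj_max P), ← hcard, ← hPmin,
        Finset.card_image_of_injOn (inj_min P)]

end surj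

lemma nc_card (n k u v : ℕ) (hk : 1 ≤ k) (hkn : k ≤ n) :
    Nat.card {π : NC n k // skip π.val.blocks = u ∧ mingarc n π.val.blocks = v} =
    ((KS (k - 1) (n - k + 1)).filter (fun p => AB true 1 p.1 p.2 = (u, v))).card := by
  have hn : 1 ≤ n := by omega
  apply card_bij_aux _ _ (fun π : NC n k =>
    (wd (π.val.blocks.image fmin) n ++ [true], wd (π.val.blocks.image fmax) n))
  · rintro ⟨P, hP, hc⟩ ⟨h1, h2⟩
    rw [Finset.mem_filter]
    refine ⟨nc_mem P k hk hkn hc, ?_⟩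
    rw [← nc_stats P hn, ← h1, ← h2]
  · rintro ⟨P, hP, hc⟩ ⟨Q, hQ, hc'⟩ - - h
    simp only [Prod.mk.injEq, List.append_cancel_right_eq] at h
    apply Subtype.ext
    exact nc_inj P Q hP hQ (wd_inj n _ _ (min_sub P) (min_sub Q) h.1)
      (wd_inj n _ _ (max_sub P) (max_sub Q) h.2)
  · rintro ⟨U, l⟩ h
    rw [Finset.mem_filter, mem_KS] at h
    obtain ⟨⟨⟨h1, h2⟩, ⟨h3, h4⟩, hV⟩, hAB⟩ := h
    simp only at h1 h2 h3 h4 hV hAB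
    have lU := cnt_tf U
    have ll := cnt_tf l
    have hln : l.length = n := by omega
    rcases List.eq_nil_or_concat U with rfl | ⟨w, x, rfl⟩
    · simp at h1; omega
    rw [List.concat_eq_append] at *
    have hwn : w.length = n := by
      rw [List.length_append, List.length_singleton] at lU
      omega
    have hx : x = true := by
      have := hV (n - 1) (by omega)
      rw [show 1 + (n - 1) = w.length by omega, List.take_append_of_le_length le_rfl,
        List.take_length] at this
      have t1 := cnt_tf (l.take (n - 1))
      have t2 := cnt_tf w
      have t3 := (List.take_sublist (n - 1) l).count_le true
      rw [List.count_append] at h1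
      by_contra hx
      simp [hx] at h1
      omega
    subst hx
    obtain ⟨M, hM, hw⟩ := wd_surj w
    obtain ⟨C, hC, hl⟩ := wd_surj l
    rw [hwn] at hM hw
    rw [hln] at hC hl
    subst hw hl
    have cM := cf_full M n hM
    have cC := cf_full C n hC
    have h2' : cf M n = n - k + 1 := by
      rw [List.count_append] at h2
      simpa [cf] using h2
    have h4' : cf C n = n - k + 1 := h4
    obtain ⟨P, p1, p2, p3⟩ := nc_surj hM hC (by omega) hn ((VV_wd M C n).1 hV)
    have st := nc_stats P hn
    have pc : P.blocks.card = n - k + 1 := by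
      rw [← Finset.card_image_of_injOn (inj_min P), p2]; omega
    rw [p2, p3, hAB] at st
    simp only [Prod.mk.injEq] at st
    exact ⟨⟨P, p1, pc⟩, st, by simp only [p2, p3]⟩


/-- The pair (skip, mingarc) is a combinatorial interpretation of `N_{n,k}(q,t)` for
all `n ≥ k ≥ 1`: the number of `π ∈ NC(n,k)` with `skip π = u` and `mingarc π = v`
equals the number of `P ∈ PP(n-k+1,k)` with `area P = u` and `bounce P = v`. -/
theorem skip_mingarc_pair (n k : ℕ) (hk : 1 ≤ k) (hkn : k ≤ n) (u v : ℕ) :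
    Nat.card {π : NC n k // skip π.val.blocks = u ∧ mingarc n π.val.blocks = v} =
    Nat.card {P : Polyomino (n - k + 1) k // area P = u ∧ bounce P = v} := by
  rw [nc_card n k u v hk hkn, pp_card _ _ u v (by omega) hk]
  have := KS_card (k - 1) (n - k) u v
  rw [show k - 1 + 1 = k by omega] at this
  exact this

end QtN
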